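/- arXiv:2408.11177 — 2 statements merged into one kernel-verified Lean document; each statement's English description precedes it below -/
import Mathlib

section
/- Assume J̄ < ∞, J_1 > 0, J is of order α ∈ (0,∞], and 1 < p < 1 + 4α′/d. Then K := inf { M[u]^{(p−1)/2} ⟨Lu,u⟩ / Σ_n |u_n|^{p+1} : u ∈ ℓ²(Z^d), u ≠ 0 } = 0. Consequently ν₀ = 0 and, for every ν > 0, I_ν < 0 and there exists q ∈ ℓ²(Z^d) with M[q] = ν and H[q] = I_ν. -/
open scoped BigOperators
open Filter Topology

noncomputable section

/-- The `ℓ^∞` norm of a lattice point of `ℤ^d`, as a natural number. -/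
def latNorm {d : ℕ} (m : Fin d → ℤ) : ℕ := Finset.univ.sup fun i => (m i).natAbs

/-- The summand `J_{|m|}` for `m ≠ 0` (and `0` for `m = 0`). -/
def JbarSummand (d : ℕ) (J : ℕ → ℝ) (m : Fin d → ℤ) : ℝ :=
  if m = 0 then 0 else J (latNorm m)

/-- `J̄ = Σ_{m ≠ 0} J_{|m|}`. -/
def Jbar (d : ℕ) (J : ℕ → ℝ) : ℝ := ∑' m : Fin d → ℤ, JbarSummand d J m

/-- The quadratic form `⟨Lu,u⟩ = (1/2) Σ_n Σ_{m ≠ n} J_{|n-m|} |u_n - u_m|²`. -/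
def pairing (d : ℕ) (J : ℕ → ℝ) (u : (Fin d → ℤ) → ℂ) : ℝ :=
  (1/2) * ∑' n : Fin d → ℤ, ∑' m : Fin d → ℤ,
    if m = n then 0 else J (latNorm (n - m)) * ‖u n - u m‖ ^ 2

/-- The mass `M[u] = Σ_n |u_n|²`. -/
def mass (d : ℕ) (u : (Fin d → ℤ) → ℂ) : ℝ := ∑' n : Fin d → ℤ, ‖u n‖ ^ 2

/-- Membership in `ℓ²(ℤ^d)`. -/
def MemL2 (d : ℕ) (u : (Fin d → ℤ) → ℂ) : Prop := Summable fun n : Fin d → ℤ => ‖u n‖ ^ 2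

/-- The potential term `Σ_n |u_n|^{p+1}`. -/
def ppot (d : ℕ) (p : ℝ) (u : (Fin d → ℤ) → ℂ) : ℝ := ∑' n : Fin d → ℤ, ‖u n‖ ^ (p + 1)

/-- The energy `H[u] = (1/2)⟨Lu,u⟩ - (1/(p+1)) Σ_n |u_n|^{p+1}`. -/
def energy (d : ℕ) (J : ℕ → ℝ) (p : ℝ) (u : (Fin d → ℤ) → ℂ) : ℝ :=
  (1/2) * pairing d J u - (1/(p+1)) * ppot d p u

/-- `I_ν = inf {H[q] : q ∈ ℓ², M[q] = ν}`. -/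
def Ifun (d : ℕ) (J : ℕ → ℝ) (p : ℝ) (ν : ℝ) : ℝ :=
  sInf {x : ℝ | ∃ q, MemL2 d q ∧ mass d q = ν ∧ energy d J p q = x}

open scoped ENNReal
/-- `J` is of order `α ∈ (0,∞]`: for finite `α`, `k^{d+α} J_k` tends to a finite positive
limit; for `α = ∞`, `k^{d+β} J_k → 0` for every `β > 0`. -/
def JOrder (d : ℕ) (J : ℕ → ℝ) (α : ℝ≥0∞) : Prop :=
  if α = ⊤ then
    ∀ β : ℝ, 0 < β → Tendsto (fun k : ℕ => (k : ℝ) ^ ((d : ℝ) + β) * J k) atTop (𝓝 0)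
  else
    ∃ A : ℝ, 0 < A ∧ Tendsto (fun k : ℕ => (k : ℝ) ^ ((d : ℝ) + α.toReal) * J k) atTop (𝓝 A)

/-- `α′ = α/2` for `α ∈ (0,2)` and `α′ = 1` for `α ∈ [2,∞]`. -/
def alphaPrime (α : ℝ≥0∞) : ℝ := if α < 2 then α.toReal / 2 else 1

/-- The Gagliardo–Nirenberg-type inequality at mass level `ν`:
`Σ_n |q_n|^{p+1} ≤ ((p+1)/2) ν^{-(p-1)/2} M[q]^{(p-1)/2} ⟨Lq,q⟩` for all `q ∈ ℓ²`. -/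
def GNineq (d : ℕ) (J : ℕ → ℝ) (p ν : ℝ) : Prop :=
  ∀ q : (Fin d → ℤ) → ℂ, MemL2 d q →
    ppot d p q ≤ ((p + 1) / 2) * ν ^ (-(p - 1) / 2) * (mass d q) ^ ((p - 1) / 2) *
      pairing d J q

/-- The excitation threshold `ν₀ = sup {ν > 0 : GN inequality holds at level ν}`,
with `ν₀ = 0` if no such `ν` exists. -/
def nuZero (d : ℕ) (J : ℕ → ℝ) (p : ℝ) : ℝ :=
  sSup (insert 0 {ν : ℝ | 0 < ν ∧ GNineq d J p ν})

/-- The variational constant `K = inf { M[u]^{(p-1)/2} ⟨Lu,u⟩ / Σ|u|^{p+1} : u ∈ ℓ², u ≠ 0 }`. -/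
def Kconst (d : ℕ) (J : ℕ → ℝ) (p : ℝ) : ℝ :=
  sInf {x : ℝ | ∃ u : (Fin d → ℤ) → ℂ, MemL2 d u ∧ u ≠ 0 ∧
    x = (mass d u) ^ ((p - 1) / 2) * pairing d J u / ppot d p u}

/-!
The cutoff of scale `L` varies slowly: if `J` has a finite moment of order `γ ≤ 2`, its quadratic
form is at most a constant times `L ^ (d - γ)`, while its mass and its potential are comparable to
`L ^ d`. Its Gagliardo–Nirenberg quotient is thus of order `L ^ (d * (p - 1) / 2 - γ)`, which tends
to `0` once `d * (p - 1) / 2 < γ`. Hence `K = 0`, and rescaling a function with small quotient to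
mass `ν` gives `I_ν < 0`.

Since the potential of `u` is at most `(sup |u|) ^ (p - 1) * M[u]`, a sequence minimizing to a
negative `I_ν` cannot tend to `0` uniformly, so after translations it is bounded below at the origin
and has a nonzero pointwise limit `q` along a subsequence. Mass and energy split asymptotically
between `q` and the remainder, and scaling shows `I_ν ≤ (ν / M[r]) H[r]` for the remainders `r`, so
that `H[q] ≤ (M[q] / ν) I_ν`. If `M[q] < ν`, scaling `q` up to mass `ν` gives the strict reverse
inequality; so `M[q] = ν` and `q` is a minimizer.
-/

section SquareSummable

variable {ι κ E F : Type*}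

theorem norm_add_sq_le_two_mul [SeminormedAddCommGroup E] (a b : E) :
    ‖a + b‖ ^ 2 ≤ 2 * (‖a‖ ^ 2 + ‖b‖ ^ 2) :=
  (pow_le_pow_left₀ (norm_nonneg _) (norm_add_le a b) 2).trans add_sq_le

theorem abs_norm_add_sq_sub_le [SeminormedAddCommGroup E] [InnerProductSpace ℝ E] (a b : E) :
    |‖a + b‖ ^ 2 - ‖a‖ ^ 2 - ‖b‖ ^ 2| ≤ 2 * (‖a‖ * ‖b‖) := by
  have expand : ‖a + b‖ ^ 2 - ‖a‖ ^ 2 - ‖b‖ ^ 2 = 2 * inner ℝ a b := by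
    rw [norm_add_sq_real]; ring
  rw [expand, abs_mul, abs_two]
  gcongr
  exact abs_real_inner_le_norm a b

theorem summable_mul_of_sq {f g : ι → ℝ} (hf0 : ∀ i, 0 ≤ f i) (hg0 : ∀ i, 0 ≤ g i)
    (hf : Summable fun i ↦ f i ^ 2) (hg : Summable fun i ↦ g i ^ 2) :
    Summable fun i ↦ f i * g i :=
  Real.summable_mul_of_Lp_Lq_of_nonneg Real.HolderConjugate.two_two hf0 hg0
    (by simpa only [Real.rpow_two] using hf) (by simpa only [Real.rpow_two] using hg)

theorem tsum_mul_le_sqrt_mul_sqrt {f g : ι → ℝ} (hf0 : ∀ i, 0 ≤ f i) (hg0 : ∀ i, 0 ≤ g i)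
    (hf : Summable fun i ↦ f i ^ 2) (hg : Summable fun i ↦ g i ^ 2) :
    ∑' i, f i * g i ≤ √(∑' i, f i ^ 2) * √(∑' i, g i ^ 2) := by
  simpa only [Real.rpow_two, ← Real.sqrt_eq_rpow] using
    Real.inner_le_Lp_mul_Lq_tsum_of_nonneg Real.HolderConjugate.two_two hf0 hg0
      (by simpa only [Real.rpow_two] using hf) (by simpa only [Real.rpow_two] using hg)

theorem tsum_mul_sub_sum_le {f g : ι → ℝ} (hf0 : ∀ i, 0 ≤ f i) (hg0 : ∀ i, 0 ≤ g i)
    (hf : Summable fun i ↦ f i ^ 2) (hg : Summable fun i ↦ g i ^ 2) (s : Finset ι) :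
    ∑' i, f i * g i - ∑ i ∈ s, f i * g i ≤
      √(∑' i : {i // i ∉ s}, f i ^ 2) * √(∑' i, g i ^ 2) := by
  rw [← (summable_mul_of_sq hf0 hg0 hf hg).sum_add_tsum_subtype_compl s, add_sub_cancel_left]
  refine (tsum_mul_le_sqrt_mul_sqrt (f := fun i : {i // i ∉ s} ↦ f i)
    (g := fun i : {i // i ∉ s} ↦ g i) (fun i ↦ hf0 i) (fun i ↦ hg0 i)
    (hf.subtype _) (hg.subtype _)).trans ?_
  gcongr
  exact hg.tsum_subtype_le _ _ fun i ↦ sq_nonneg (g i)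

theorem tendsto_tsum_norm_mul_norm [SeminormedAddCommGroup E] [SeminormedAddCommGroup F]
    {l : Filter κ} {f : ι → E} {g : κ → ι → F} {B : ℝ}
    (hf : Summable fun i ↦ ‖f i‖ ^ 2) (hg : ∀ k, Summable fun i ↦ ‖g k i‖ ^ 2)
    (hB : ∀ k, ∑' i, ‖g k i‖ ^ 2 ≤ B) (hlim : ∀ i, Tendsto (fun k ↦ g k i) l (𝓝 0)) :
    Tendsto (fun k ↦ ∑' i, ‖f i‖ * ‖g k i‖) l (𝓝 0) := by
  -- The finite partial sums converge uniformly in `k`, so the two limits may be exchanged.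
  have tail_small : Tendsto (fun s : Finset ι ↦ √(∑' i : {i // i ∉ s}, ‖f i‖ ^ 2) * √B)
      atTop (𝓝 0) := by
    simpa using (tendsto_tsum_compl_atTop_zero fun i ↦ ‖f i‖ ^ 2).sqrt.mul_const √B
  have uniform : TendstoUniformly (fun (s : Finset ι) k ↦ ∑ i ∈ s, ‖f i‖ * ‖g k i‖)
      (fun k ↦ ∑' i, ‖f i‖ * ‖g k i‖) atTop := by
    rw [Metric.tendstoUniformly_iff]
    intro ε hε
    filter_upwards [tail_small.eventually (gt_mem_nhds hε)] with s hs k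
    have hsum := summable_mul_of_sq (fun i ↦ norm_nonneg (f i)) (fun i ↦ norm_nonneg (g k i))
      hf (hg k)
    have hle : ∑ i ∈ s, ‖f i‖ * ‖g k i‖ ≤ ∑' i, ‖f i‖ * ‖g k i‖ :=
      hsum.sum_le_tsum s fun i _ ↦ by positivity
    rw [Real.dist_eq, abs_of_nonneg (sub_nonneg.2 hle)]
    refine lt_of_le_of_lt ?_ hs
    refine (tsum_mul_sub_sum_le (fun i ↦ norm_nonneg (f i)) (fun i ↦ norm_nonneg (g k i))
      hf (hg k) s).trans ?_
    gcongr
    exact hB k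
  refine uniform.tendsto_of_eventually_tendsto (L := fun _ ↦ 0)
    (Eventually.of_forall fun s ↦ ?_) tendsto_const_nhds
  simpa using tendsto_finsetSum s fun i _ ↦ (hlim i).norm.const_mul ‖f i‖

theorem tendsto_tsum_norm_add_sq_sub [SeminormedAddCommGroup E] [InnerProductSpace ℝ E]
    {l : Filter κ} {f : ι → E} {g : κ → ι → E} {B : ℝ}
    (hf : Summable fun i ↦ ‖f i‖ ^ 2) (hg : ∀ k, Summable fun i ↦ ‖g k i‖ ^ 2)
    (hB : ∀ k, ∑' i, ‖g k i‖ ^ 2 ≤ B) (hlim : ∀ i, Tendsto (fun k ↦ g k i) l (𝓝 0)) :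
    Tendsto (fun k ↦ ∑' i, ‖f i + g k i‖ ^ 2 - ∑' i, ‖f i‖ ^ 2 - ∑' i, ‖g k i‖ ^ 2) l (𝓝 0) := by
  have cross_small := (tendsto_tsum_norm_mul_norm hf hg hB hlim).const_mul 2
  rw [mul_zero] at cross_small
  refine squeeze_zero_norm (fun k ↦ ?_) cross_small
  have hsum : Summable fun i ↦ ‖f i + g k i‖ ^ 2 :=
    .of_nonneg_of_le (fun _ ↦ sq_nonneg _) (fun i ↦ norm_add_sq_le_two_mul (f i) (g k i))
      ((hf.add (hg k)).mul_left 2)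
  have hcross := (summable_mul_of_sq (fun i ↦ norm_nonneg (f i)) (fun i ↦ norm_nonneg (g k i))
    hf (hg k)).hasSum.mul_left 2
  rw [← hsum.tsum_sub hf, ← (hsum.sub hf).tsum_sub (hg k)]
  exact tsum_of_norm_bounded hcross fun i ↦ abs_norm_add_sq_sub_le (f i) (g k i)

theorem hasSum_add_mul_comp_sub {G : Type*} [AddGroup G] {g h : G → ℝ} {a b : ℝ}
    (hg : HasSum g a) (hh : HasSum h b) (hg0 : 0 ≤ g) (hh0 : 0 ≤ h) :
    HasSum (fun z : G × G ↦ (g z.1 + g z.2) * h (z.1 - z.2)) (2 * (a * b)) := by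
  have hprod : HasSum (fun z : G × G ↦ g z.1 * h z.2) (a * b) :=
    hg.mul hh (hg.summable.mul_of_nonneg hh.summable hg0 hh0)
  have hfst : HasSum (fun z : G × G ↦ g z.1 * h (z.1 - z.2)) (a * b) :=
    ((Equiv.refl G).prodShear fun x ↦ Equiv.subLeft x).hasSum_iff.2 hprod
  have hsnd : HasSum (fun z : G × G ↦ g z.2 * h (z.1 - z.2)) (a * b) :=
    ((Equiv.prodComm G G).trans ((Equiv.refl G).prodShear fun x ↦ Equiv.subRight x)).hasSum_iff.2
      hprod
  simpa only [add_mul, two_mul] using hfst.add hsnd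

end SquareSummable

section Rpow

theorem rpow_add_le_rpow_add_mul {s x y : ℝ} (hs : 1 ≤ s) (hx : 0 ≤ x) (hy : 0 ≤ y) :
    (x + y) ^ s ≤ x ^ s + s * ((x + y) ^ (s - 1) * y) := by
  rcases (add_nonneg hx hy).eq_or_lt' with hz | hz
  · obtain ⟨rfl, rfl⟩ := (add_eq_zero_iff_of_nonneg hx hy).1 hz
    simp
  have bernoulli : 1 + s * -(y / (x + y)) ≤ (1 + -(y / (x + y))) ^ s :=
    one_add_mul_self_le_rpow_one_add (neg_le_neg ((div_le_one hz).2 (by linarith))) hs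
  have hratio : 1 + -(y / (x + y)) = x / (x + y) := by field_simp; ring
  have hpow : (x + y) ^ s = (x + y) ^ (s - 1) * (x + y) := by
    rw [← Real.rpow_add_one hz.ne', sub_add_cancel]
  rw [hratio, Real.div_rpow hx hz.le, le_div_iff₀ (by positivity)] at bernoulli
  have hcancel : s * -(y / (x + y)) * (x + y) ^ s = -(s * ((x + y) ^ (s - 1) * y)) := by
    rw [hpow]; field_simp
  linarith

theorem rpow_add_le_rpow_add_rpow_add {s R x y : ℝ} (hs : 2 ≤ s) (hx : 0 ≤ x) (hy : 0 ≤ y)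
    (hxR : x ≤ R) (hyR : y ≤ R) :
    (x + y) ^ s ≤ x ^ s + y ^ s + 2 * s * (2 * R) ^ (s - 2) * (x * y) := by
  wlog hyx : y ≤ x generalizing x y
  · have := this hy hx hyR hxR (le_of_not_ge hyx)
    rw [add_comm x y, mul_comm x y]
    linarith
  have hR : 0 ≤ R := hx.trans hxR
  have hpow : (x + y) ^ (s - 1) ≤ (2 * R) ^ (s - 2) * (2 * x) :=
    calc (x + y) ^ (s - 1) = (x + y) ^ (s - 2) * (x + y) := by
          rw [← Real.rpow_add_one' (by positivity) (by linarith)]; congr 1; ring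
      _ ≤ (2 * R) ^ (s - 2) * (2 * x) := by gcongr <;> linarith
  calc (x + y) ^ s ≤ x ^ s + s * ((x + y) ^ (s - 1) * y) :=
        rpow_add_le_rpow_add_mul (by linarith) hx hy
    _ ≤ x ^ s + s * ((2 * R) ^ (s - 2) * (2 * x) * y) := by gcongr
    _ ≤ x ^ s + y ^ s + 2 * s * (2 * R) ^ (s - 2) * (x * y) := by
        linarith [Real.rpow_nonneg hy s]

theorem rpow_add_one_le_rpow_sub_one_mul_sq {p x δ : ℝ} (hp : 1 ≤ p) (hx : 0 ≤ x) (h : x ≤ δ) :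
    x ^ (p + 1) ≤ δ ^ (p - 1) * x ^ 2 := by
  have split : x ^ (p + 1) = x ^ (p - 1) * x ^ 2 := by
    rw [← Real.rpow_two, ← Real.rpow_add_of_nonneg hx (by linarith) (by norm_num)]
    congr 1; ring
  rw [split]
  gcongr

end Rpow

section LatticeFunctionals

variable {d : ℕ} {J : ℕ → ℝ} {p : ℝ} {u v : (Fin d → ℤ) → ℂ}

theorem latNorm_eq_norm (m : Fin d → ℤ) : (latNorm m : ℝ) = ‖m‖ := by
  simp only [latNorm, Pi.norm_def, ← NNReal.coe_natCast, Nat.cast_finsetSup,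
    NNReal.natCast_natAbs]

theorem JbarSummand_nonneg (hJ : ∀ k, 0 ≤ J k) (m : Fin d → ℤ) : 0 ≤ JbarSummand d J m := by
  unfold JbarSummand
  split_ifs
  exacts [le_rfl, hJ _]

section SquareSummableFunctions

theorem memL2_of_eq_zero_off {S : Finset (Fin d → ℤ)} (h : ∀ n ∉ S, u n = 0) : MemL2 d u :=
  summable_of_ne_finset_zero fun n hn ↦ by rw [h n hn, norm_zero, zero_pow two_ne_zero]

theorem MemL2.add (hu : MemL2 d u) (hv : MemL2 d v) : MemL2 d (u + v) :=
  .of_nonneg_of_le (fun _ ↦ sq_nonneg _) (fun n ↦ norm_add_sq_le_two_mul (u n) (v n))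
    ((Summable.add hu hv).mul_left 2)

theorem MemL2.neg (hu : MemL2 d u) : MemL2 d (-u) := by
  simpa only [MemL2, Pi.neg_apply, norm_neg] using hu

theorem MemL2.sub (hu : MemL2 d u) (hv : MemL2 d v) : MemL2 d (u - v) :=
  sub_eq_add_neg u v ▸ hu.add hv.neg

theorem mass_nonneg (u : (Fin d → ℤ) → ℂ) : 0 ≤ mass d u := tsum_nonneg fun _ ↦ sq_nonneg _

theorem mass_neg (u : (Fin d → ℤ) → ℂ) : mass d (-u) = mass d u := by
  simp only [mass, Pi.neg_apply, norm_neg]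

theorem mass_add_le (hu : MemL2 d u) (hv : MemL2 d v) :
    mass d (u + v) ≤ 2 * (mass d u + mass d v) :=
  calc mass d (u + v) ≤ ∑' n, 2 * (‖u n‖ ^ 2 + ‖v n‖ ^ 2) :=
        (hu.add hv).tsum_le_tsum (fun n ↦ norm_add_sq_le_two_mul (u n) (v n))
          ((Summable.add hu hv).mul_left 2)
    _ = 2 * (mass d u + mass d v) := by rw [tsum_mul_left, Summable.tsum_add hu hv, mass, mass]

theorem mass_sub_le (hu : MemL2 d u) (hv : MemL2 d v) :
    mass d (u - v) ≤ 2 * (mass d u + mass d v) := by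
  rw [sub_eq_add_neg, ← mass_neg v]
  exact mass_add_le hu hv.neg

theorem mass_pos (hu : MemL2 d u) (h : u ≠ 0) : 0 < mass d u := by
  obtain ⟨n, hn⟩ := Function.ne_iff.1 h
  exact Summable.tsum_pos hu (fun _ ↦ sq_nonneg _) n (pow_pos (norm_pos_iff.2 hn) 2)

theorem MemL2.norm_le_sqrt_mass (hu : MemL2 d u) (n : Fin d → ℤ) : ‖u n‖ ≤ √(mass d u) :=
  Real.le_sqrt_of_sq_le <| Summable.le_tsum hu n fun _ _ ↦ sq_nonneg _

end SquareSummableFunctions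

section Potential

theorem ppot_nonneg (p : ℝ) (u : (Fin d → ℤ) → ℂ) : 0 ≤ ppot d p u :=
  tsum_nonneg fun _ ↦ by positivity

theorem MemL2.summable_rpow (hp : 1 ≤ p) (hu : MemL2 d u) :
    Summable fun n ↦ ‖u n‖ ^ (p + 1) :=
  .of_nonneg_of_le (fun _ ↦ by positivity)
    (fun n ↦ rpow_add_one_le_rpow_sub_one_mul_sq hp (norm_nonneg _) (hu.norm_le_sqrt_mass n))
    (Summable.mul_left _ hu)

theorem ppot_le (hp : 1 ≤ p) (hu : MemL2 d u) {δ : ℝ} (hδ : ∀ n, ‖u n‖ ≤ δ) :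
    ppot d p u ≤ δ ^ (p - 1) * mass d u := by
  rw [mass, ← tsum_mul_left]
  exact (hu.summable_rpow hp).tsum_le_tsum
    (fun n ↦ rpow_add_one_le_rpow_sub_one_mul_sq hp (norm_nonneg _) (hδ n))
    (Summable.mul_left _ hu)

theorem ppot_pos (hp : 1 ≤ p) (hu : MemL2 d u) (h : u ≠ 0) : 0 < ppot d p u := by
  obtain ⟨n, hn⟩ := Function.ne_iff.1 h
  exact (hu.summable_rpow hp).tsum_pos (fun _ ↦ by positivity) n
    (Real.rpow_pos_of_pos (norm_pos_iff.2 hn) _)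

end Potential

section QuadraticForm

theorem pairing_nonneg (hJ : ∀ k, 0 ≤ J k) (u : (Fin d → ℤ) → ℂ) : 0 ≤ pairing d J u := by
  refine mul_nonneg (by norm_num) (tsum_nonneg fun n ↦ tsum_nonneg fun m ↦ ?_)
  split_ifs
  exacts [le_rfl, mul_nonneg (hJ _) (sq_nonneg _)]

/-- The difference `u_n - u_m` weighted by `√J_{|n-m|}`, a function on pairs of sites that is
linear in `u`. Up to the factor `1/2`, the quadratic form `⟨Lu,u⟩` is its squared `ℓ²` norm. -/
def weightedDiff (d : ℕ) (J : ℕ → ℝ) (u : (Fin d → ℤ) → ℂ)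
    (z : (Fin d → ℤ) × (Fin d → ℤ)) : ℂ :=
  √(JbarSummand d J (z.1 - z.2)) • (u z.1 - u z.2)

theorem weightedDiff_add (z : (Fin d → ℤ) × (Fin d → ℤ)) :
    weightedDiff d J (u + v) z = weightedDiff d J u z + weightedDiff d J v z := by
  simp only [weightedDiff, Pi.add_apply, ← smul_add, add_sub_add_comm]

theorem norm_weightedDiff_sq (hJ : ∀ k, 0 ≤ J k) (u : (Fin d → ℤ) → ℂ)
    (z : (Fin d → ℤ) × (Fin d → ℤ)) :
    ‖weightedDiff d J u z‖ ^ 2 = JbarSummand d J (z.1 - z.2) * ‖u z.1 - u z.2‖ ^ 2 := by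
  rw [weightedDiff, norm_smul, mul_pow, Real.norm_eq_abs, sq_abs,
    Real.sq_sqrt (JbarSummand_nonneg hJ _)]

theorem pairing_eq_tsum_weightedDiff (hJ : ∀ k, 0 ≤ J k)
    (hu : Summable fun z ↦ ‖weightedDiff d J u z‖ ^ 2) :
    pairing d J u = 1 / 2 * ∑' z, ‖weightedDiff d J u z‖ ^ 2 := by
  rw [hu.tsum_prod, pairing]
  congr 1
  refine tsum_congr fun n ↦ tsum_congr fun m ↦ ?_
  rw [norm_weightedDiff_sq hJ, JbarSummand]
  simp only [sub_eq_zero, eq_comm (a := n), ite_mul, zero_mul]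

theorem pairing_le_of_le_hasSum (hJ : ∀ k, 0 ≤ J k)
    {b : (Fin d → ℤ) × (Fin d → ℤ) → ℝ} {B : ℝ} (hb : HasSum b B)
    (h : ∀ z, ‖weightedDiff d J u z‖ ^ 2 ≤ b z) : pairing d J u ≤ 1 / 2 * B := by
  have hsum : Summable fun z ↦ ‖weightedDiff d J u z‖ ^ 2 :=
    .of_nonneg_of_le (fun _ ↦ sq_nonneg _) h hb.summable
  rw [pairing_eq_tsum_weightedDiff hJ hsum]
  gcongr
  exact hasSum_le h hsum.hasSum hb

theorem norm_weightedDiff_sq_le (hJ : ∀ k, 0 ≤ J k) (u : (Fin d → ℤ) → ℂ)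
    (z : (Fin d → ℤ) × (Fin d → ℤ)) :
    ‖weightedDiff d J u z‖ ^ 2 ≤
      2 * ((‖u z.1‖ ^ 2 + ‖u z.2‖ ^ 2) * JbarSummand d J (z.1 - z.2)) := by
  rw [norm_weightedDiff_sq hJ, ← mul_assoc, mul_comm]
  refine mul_le_mul_of_nonneg_right ?_ (JbarSummand_nonneg hJ _)
  simpa only [norm_neg, ← sub_eq_add_neg] using norm_add_sq_le_two_mul (u z.1) (-u z.2)

theorem MemL2.hasSum_add_mul_JbarSummand (hJ : ∀ k, 0 ≤ J k) (hJbar : Summable (JbarSummand d J))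
    (hu : MemL2 d u) :
    HasSum (fun z : (Fin d → ℤ) × (Fin d → ℤ) ↦
        2 * ((‖u z.1‖ ^ 2 + ‖u z.2‖ ^ 2) * JbarSummand d J (z.1 - z.2)))
      (2 * (2 * (mass d u * Jbar d J))) :=
  (hasSum_add_mul_comp_sub (Summable.hasSum hu) hJbar.hasSum (fun _ ↦ sq_nonneg _)
    (JbarSummand_nonneg hJ)).mul_left 2

theorem MemL2.summable_weightedDiff (hJ : ∀ k, 0 ≤ J k) (hJbar : Summable (JbarSummand d J))
    (hu : MemL2 d u) : Summable fun z ↦ ‖weightedDiff d J u z‖ ^ 2 :=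
  .of_nonneg_of_le (fun _ ↦ sq_nonneg _) (norm_weightedDiff_sq_le hJ u)
    (hu.hasSum_add_mul_JbarSummand hJ hJbar).summable

theorem pairing_le (hJ : ∀ k, 0 ≤ J k) (hJbar : Summable (JbarSummand d J)) (hu : MemL2 d u) :
    pairing d J u ≤ 2 * (mass d u * Jbar d J) :=
  (pairing_le_of_le_hasSum hJ (hu.hasSum_add_mul_JbarSummand hJ hJbar)
    (norm_weightedDiff_sq_le hJ u)).trans_eq (by ring)

end QuadraticForm

section Scaling

theorem MemL2.smul (t : ℝ) (hu : MemL2 d u) : MemL2 d (t • u) := by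
  simpa only [MemL2, Pi.smul_apply, norm_smul, mul_pow] using Summable.mul_left (‖t‖ ^ 2) hu

theorem mass_smul (t : ℝ) (u : (Fin d → ℤ) → ℂ) : mass d (t • u) = t ^ 2 * mass d u := by
  simp only [mass, Pi.smul_apply, norm_smul, mul_pow, Real.norm_eq_abs, sq_abs, tsum_mul_left]

theorem pairing_smul (t : ℝ) (u : (Fin d → ℤ) → ℂ) :
    pairing d J (t • u) = t ^ 2 * pairing d J u := by
  have summand (n m : Fin d → ℤ) :
      (if m = n then 0 else J (latNorm (n - m)) * ‖(t • u) n - (t • u) m‖ ^ 2) =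
        t ^ 2 * if m = n then 0 else J (latNorm (n - m)) * ‖u n - u m‖ ^ 2 := by
    rw [mul_ite, mul_zero, Pi.smul_apply, Pi.smul_apply, ← smul_sub, norm_smul, mul_pow,
      Real.norm_eq_abs, sq_abs, mul_left_comm]
  simp only [pairing, summand, tsum_mul_left, mul_left_comm]

theorem ppot_smul (t : ℝ) (u : (Fin d → ℤ) → ℂ) :
    ppot d p (t • u) = |t| ^ (p + 1) * ppot d p u := by
  simp only [ppot, Pi.smul_apply, norm_smul, Real.norm_eq_abs,
    Real.mul_rpow (abs_nonneg t) (norm_nonneg _), tsum_mul_left]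

theorem energy_sqrt_smul {θ : ℝ} (hθ : 0 < θ) (u : (Fin d → ℤ) → ℂ) :
    energy d J p (√θ • u) =
      θ * (1 / 2 * pairing d J u - 1 / (p + 1) * (θ ^ ((p - 1) / 2) * ppot d p u)) := by
  have hpow : √θ ^ (p + 1) = θ * θ ^ ((p - 1) / 2) := by
    rw [Real.sqrt_eq_rpow, ← Real.rpow_mul hθ.le, mul_comm θ, ← Real.rpow_add_one hθ.ne']
    ring_nf
  rw [energy, pairing_smul, ppot_smul, Real.sq_sqrt hθ.le, abs_of_nonneg θ.sqrt_nonneg, hpow]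
  ring

theorem energy_sqrt_smul_le (hp : 1 ≤ p) {θ : ℝ} (hθ : 1 ≤ θ) (u : (Fin d → ℤ) → ℂ) :
    energy d J p (√θ • u) ≤ θ * energy d J p u := by
  have hppot := ppot_nonneg p u
  rw [energy_sqrt_smul (zero_lt_one.trans_le hθ), energy]
  gcongr
  exact le_mul_of_one_le_left hppot (Real.one_le_rpow hθ (by linarith))

theorem energy_sqrt_smul_lt (hp : 1 < p) (hu : MemL2 d u) (h : u ≠ 0) {θ : ℝ} (hθ : 1 < θ) :
    energy d J p (√θ • u) < θ * energy d J p u := by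
  have hppot := ppot_pos hp.le hu h
  rw [energy_sqrt_smul (zero_lt_one.trans hθ), energy]
  gcongr
  exact lt_mul_of_one_lt_left hppot (Real.one_lt_rpow hθ (by linarith))

theorem mass_sqrt_div_mass_smul (hu : MemL2 d u) (h : u ≠ 0) {ν : ℝ} (hν : 0 ≤ ν) :
    mass d (√(ν / mass d u) • u) = ν := by
  rw [mass_smul, Real.sq_sqrt (div_nonneg hν (mass_nonneg u)),
    div_mul_cancel₀ _ (mass_pos hu h).ne']

end Scaling

section Translation

theorem MemL2.comp_add_right (hu : MemL2 d u) (a : Fin d → ℤ) : MemL2 d fun n ↦ u (n + a) :=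
  (Equiv.addRight a).summable_iff (f := fun n ↦ ‖u n‖ ^ 2) |>.2 hu

theorem mass_comp_add_right (u : (Fin d → ℤ) → ℂ) (a : Fin d → ℤ) :
    mass d (fun n ↦ u (n + a)) = mass d u :=
  (Equiv.addRight a).tsum_eq fun n ↦ ‖u n‖ ^ 2

theorem energy_comp_add_right (u : (Fin d → ℤ) → ℂ) (a : Fin d → ℤ) :
    energy d J p (fun n ↦ u (n + a)) = energy d J p u := by
  have hppot : ppot d p (fun n ↦ u (n + a)) = ppot d p u :=
    (Equiv.addRight a).tsum_eq fun n ↦ ‖u n‖ ^ (p + 1)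
  have hpairing : pairing d J (fun n ↦ u (n + a)) = pairing d J u := by
    rw [pairing, pairing]
    congr 1
    conv_rhs => rw [← (Equiv.addRight a).tsum_eq]
    refine tsum_congr fun n ↦ ?_
    conv_rhs => rw [← (Equiv.addRight a).tsum_eq]
    simp only [Equiv.coe_addRight, add_left_inj, add_sub_add_right_eq_sub]
  rw [energy, energy, hpairing, hppot]

end Translation

end LatticeFunctionals

section KernelMoments

variable {d : ℕ} {J : ℕ → ℝ} {γ : ℝ}

theorem summable_norm_rpow_of_lt_neg_card {ι : Type*} [Fintype ι] {r : ℝ}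
    (hr : r < -Fintype.card ι) : Summable fun m : ι → ℤ ↦ ‖m‖ ^ r := by
  let L : Submodule ℤ (ι → ℝ) := Submodule.span ℤ (Set.range (Pi.basisFun ℝ ι))
  have mem_L (m : ι → ℤ) : (fun i ↦ (m i : ℝ)) ∈ L := by
    rw [Module.Basis.mem_span_iff_repr_mem]
    exact fun i ↦ ⟨m i, by simp⟩
  have coe_injective : Function.Injective fun m : ι → ℤ ↦ (⟨_, mem_L m⟩ : L) := fun a b hab ↦
    funext fun i ↦ Int.cast_injective (congrFun (congrArg Subtype.val hab) i)
  have hrank : r < -Module.finrank ℤ L := by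
    rwa [ZLattice.rank ℝ L, Module.finrank_fintype_fun_eq_card]
  have norm_coe (m : ι → ℤ) : ‖(⟨_, mem_L m⟩ : L)‖ = ‖m‖ := rfl
  simpa only [Function.comp_def, norm_coe] using
    (ZLattice.summable_norm_rpow L r hrank).comp_injective coe_injective

theorem summable_moment_of_le (hJ : ∀ k, 0 ≤ J k) {β C : ℝ} (hγβ : γ < β)
    (hC : ∀ k : ℕ, (k : ℝ) ^ ((d : ℝ) + β) * J k ≤ C) :
    Summable fun m : Fin d → ℤ ↦ JbarSummand d J m * ‖m‖ ^ γ := by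
  have hC0 : 0 ≤ C := (mul_nonneg (by positivity) (hJ 0)).trans (hC 0)
  have hdom : Summable fun m : Fin d → ℤ ↦ C * ‖m‖ ^ (γ - β - d) :=
    (summable_norm_rpow_of_lt_neg_card (by rw [Fintype.card_fin]; linarith)).mul_left C
  refine .of_nonneg_of_le
    (fun m ↦ mul_nonneg (JbarSummand_nonneg hJ m) (by positivity)) (fun m ↦ ?_) hdom
  rcases eq_or_ne m 0 with rfl | hm
  · simp only [JbarSummand, if_true, zero_mul]
    positivity
  · calc JbarSummand d J m * ‖m‖ ^ γ
        = ‖m‖ ^ ((d : ℝ) + β) * J (latNorm m) * ‖m‖ ^ (γ - β - d) := by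
          rw [JbarSummand, if_neg hm, mul_right_comm, ← Real.rpow_add (norm_pos_iff.2 hm), mul_comm]
          ring_nf
      _ ≤ C * ‖m‖ ^ (γ - β - d) := by
          gcongr
          rw [← latNorm_eq_norm]
          exact hC _

theorem two_mul_alphaPrime_le_two (α : ℝ≥0∞) : 2 * alphaPrime α ≤ 2 := by
  unfold alphaPrime
  split_ifs with h
  · have : α.toReal ≤ 2 := ENNReal.toReal_mono ENNReal.ofNat_ne_top h.le
    linarith
  · norm_num

theorem two_mul_alphaPrime_le_toReal {α : ℝ≥0∞} (hα : α ≠ ⊤) : 2 * alphaPrime α ≤ α.toReal := by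
  unfold alphaPrime
  split_ifs with h
  · linarith
  · have : 2 ≤ α.toReal := ENNReal.toReal_mono hα (not_lt.1 h)
    linarith

theorem summable_moment_of_JOrder (hJ : ∀ k, 0 ≤ J k) {α : ℝ≥0∞} (horder : JOrder d J α)
    (hγ : γ < 2 * alphaPrime α) :
    Summable fun m : Fin d → ℤ ↦ JbarSummand d J m * ‖m‖ ^ γ := by
  obtain ⟨β, hγβ, A, hA⟩ : ∃ β, γ < β ∧ ∃ A,
      Tendsto (fun k : ℕ ↦ (k : ℝ) ^ ((d : ℝ) + β) * J k) atTop (𝓝 A) := by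
    unfold JOrder at horder
    split_ifs at horder with htop
    · exact ⟨max γ 0 + 1, by linarith [le_max_left γ 0], 0,
        horder _ (by linarith [le_max_right γ 0])⟩
    · obtain ⟨A, -, hA⟩ := horder
      exact ⟨α.toReal, hγ.trans_le (two_mul_alphaPrime_le_toReal htop), A, hA⟩
  obtain ⟨C, hC⟩ := hA.bddAbove_range
  exact summable_moment_of_le hJ hγβ fun k ↦ hC ⟨k, rfl⟩

theorem exists_summable_moment (hd : 1 ≤ d) (hJ : ∀ k, 0 ≤ J k) {α : ℝ≥0∞}
    (horder : JOrder d J α) {p : ℝ} (hp : p < 1 + 4 * alphaPrime α / d) :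
    ∃ γ : ℝ, d * (p - 1) / 2 < γ ∧ γ ≤ 2 ∧
      Summable fun m : Fin d → ℤ ↦ JbarSummand d J m * ‖m‖ ^ γ := by
  have hs : d * (p - 1) / 2 < 2 * alphaPrime α := by
    rw [← sub_lt_iff_lt_add', lt_div_iff₀ (by positivity)] at hp
    linarith
  obtain ⟨γ, hγ, hγα⟩ := exists_between hs
  exact ⟨γ, hγ, hγα.le.trans (two_mul_alphaPrime_le_two α), summable_moment_of_JOrder hJ horder hγα⟩

theorem summable_JbarSummand_of_moment (hJ : ∀ k, 0 ≤ J k) (hγ : 0 ≤ γ)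
    (hmom : Summable fun m : Fin d → ℤ ↦ JbarSummand d J m * ‖m‖ ^ γ) :
    Summable (JbarSummand d J) := by
  refine .of_nonneg_of_le (JbarSummand_nonneg hJ) (fun m ↦ ?_) hmom
  rcases eq_or_ne m 0 with rfl | hm
  · simp only [JbarSummand, if_true, zero_mul, le_refl]
  · have one_le_norm : 1 ≤ ‖m‖ := by
      have := norm_pos_iff.2 hm
      rw [← latNorm_eq_norm] at this ⊢
      exact_mod_cast this
    exact le_mul_of_one_le_right (JbarSummand_nonneg hJ m) (Real.one_le_rpow one_le_norm hγ)

end KernelMoments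

section TestFunctions

variable {d : ℕ} {J : ℕ → ℝ} {p γ : ℝ} {u : (Fin d → ℤ) → ℂ} {S : Finset (Fin d → ℤ)} {L : ℕ}

theorem mass_le_card (hS : ∀ n ∉ S, u n = 0) (h : ∀ n, ‖u n‖ ≤ 1) : mass d u ≤ S.card := by
  have hsum : mass d u = ∑ n ∈ S, ‖u n‖ ^ 2 :=
    tsum_eq_sum fun n hn ↦ by rw [hS n hn, norm_zero, zero_pow two_ne_zero]
  rw [hsum, ← nsmul_one]
  exact Finset.sum_le_card_nsmul _ _ _ fun n _ ↦ pow_le_one₀ (norm_nonneg _) (h n)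

theorem card_le_ppot (hp : 1 ≤ p) (hu : MemL2 d u) (h : ∀ n ∈ S, 1 ≤ ‖u n‖) :
    S.card ≤ ppot d p u :=
  calc (S.card : ℝ) = S.card • 1 := (nsmul_one _).symm
    _ ≤ ∑ n ∈ S, ‖u n‖ ^ (p + 1) :=
        Finset.card_nsmul_le_sum _ _ _ fun n hn ↦ Real.one_le_rpow (h n hn) (by linarith)
    _ ≤ ppot d p u := (hu.summable_rpow hp).sum_le_tsum S fun _ _ ↦ by positivity

theorem pairing_le_card_mul (hJ : ∀ k, 0 ≤ J k) {ω : (Fin d → ℤ) → ℝ}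
    (hω : Summable fun m ↦ JbarSummand d J m * ω m) (hS : ∀ n ∉ S, u n = 0)
    (h : ∀ n m, ‖u n - u m‖ ^ 2 ≤ ω (n - m)) :
    pairing d J u ≤ S.card * ∑' m, JbarSummand d J m * ω m := by
  let χ : (Fin d → ℤ) → ℝ := fun n ↦ if n ∈ S then 1 else 0
  have χ_nonneg (n : Fin d → ℤ) : 0 ≤ χ n := by dsimp only [χ]; split_ifs <;> norm_num
  have hχ : HasSum χ S.card := by
    simpa [χ] using hasSum_sum_of_ne_finset_zero (f := χ) (s := S) fun n hn ↦ if_neg hn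
  have hω0 (m : Fin d → ℤ) : 0 ≤ JbarSummand d J m * ω m := by
    refine mul_nonneg (JbarSummand_nonneg hJ m) ?_
    simpa only [sub_zero] using (sq_nonneg _).trans (h m 0)
  refine (pairing_le_of_le_hasSum hJ (hasSum_add_mul_comp_sub hχ hω.hasSum χ_nonneg hω0)
    fun z ↦ ?_).trans_eq (by ring)
  rw [norm_weightedDiff_sq hJ]
  by_cases hz : z.1 ∈ S ∨ z.2 ∈ S
  · have one_le : 1 ≤ χ z.1 + χ z.2 := by
      rcases hz with hz | hz
      · linarith [χ_nonneg z.2, show χ z.1 = 1 from if_pos hz]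
      · linarith [χ_nonneg z.1, show χ z.2 = 1 from if_pos hz]
    exact (mul_le_mul_of_nonneg_left (h z.1 z.2) (JbarSummand_nonneg hJ _)).trans
      (le_mul_of_one_le_left (hω0 _) one_le)
  · rw [not_or] at hz
    rw [hS _ hz.1, hS _ hz.2, sub_zero, norm_zero, zero_pow two_ne_zero, mul_zero]
    exact mul_nonneg (add_nonneg (χ_nonneg _) (χ_nonneg _)) (hω0 _)

/-- The lattice cube `{n ∈ ℤ^d : |n| ≤ N}`, the ball of radius `N` for the `ℓ^∞` norm. -/
def cube (d N : ℕ) : Finset (Fin d → ℤ) := Finset.Icc (fun _ ↦ -(N : ℤ)) (fun _ ↦ (N : ℤ))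

theorem mem_cube {N : ℕ} {n : Fin d → ℤ} : n ∈ cube d N ↔ ‖n‖ ≤ N := by
  simp only [cube, Finset.mem_Icc, Pi.le_def, ← forall_and, ← abs_le,
    pi_norm_le_iff_of_nonneg (Nat.cast_nonneg (α := ℝ) N), Int.norm_eq_abs]
  norm_cast

theorem card_cube (d N : ℕ) : ((cube d N).card : ℝ) = (2 * N + 1) ^ d := by
  have side : ((N : ℤ) + 1 - -N).toNat = 2 * N + 1 := by omega
  rw [cube, Pi.card_Icc]
  simp only [Int.card_Icc, side, Finset.prod_const, Finset.card_univ, Fintype.card_fin]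
  norm_cast

/-- The trial function of scale `L > 0`: it equals `1` for `|n| ≤ L`, vanishes for `|n| ≥ 2L`, and
decreases linearly in `|n|` in between. For `L = 0`, where `‖n‖ / L = 0`, it is constantly `1`. -/
def cutoff (d L : ℕ) (n : Fin d → ℤ) : ℂ := ((max (min (2 - ‖n‖ / L) 1) 0 : ℝ) : ℂ)

theorem norm_cutoff (n : Fin d → ℤ) : ‖cutoff d L n‖ = max (min (2 - ‖n‖ / L) 1) 0 := by
  rw [cutoff, Complex.norm_real, Real.norm_of_nonneg (le_max_right _ _)]

theorem norm_cutoff_le_one (n : Fin d → ℤ) : ‖cutoff d L n‖ ≤ 1 := by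
  rw [norm_cutoff]
  exact max_le (min_le_right _ _) zero_le_one

theorem norm_cutoff_eq_one {n : Fin d → ℤ} (hn : n ∈ cube d L) : ‖cutoff d L n‖ = 1 := by
  have : ‖n‖ / L ≤ 1 := div_le_one_of_le₀ (mem_cube.1 hn) (Nat.cast_nonneg L)
  rw [norm_cutoff, min_eq_right (by linarith), max_eq_left zero_le_one]

theorem cutoff_eq_zero (hL : 0 < L) {n : Fin d → ℤ} (hn : n ∉ cube d (2 * L)) :
    cutoff d L n = 0 := by
  have : 2 ≤ ‖n‖ / L := by
    rw [le_div_iff₀ (by exact_mod_cast hL)]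
    simpa only [Nat.cast_mul, Nat.cast_ofNat] using (not_le.1 (mem_cube.not.1 hn)).le
  rw [cutoff, max_eq_right (min_le_of_left_le (by linarith)), Complex.ofReal_zero]

theorem memL2_cutoff (hL : 0 < L) : MemL2 d (cutoff d L) :=
  memL2_of_eq_zero_off fun _ ↦ cutoff_eq_zero hL

theorem norm_cutoff_sub_le_div (n m : Fin d → ℤ) :
    ‖cutoff d L n - cutoff d L m‖ ≤ ‖n - m‖ / L := by
  rw [cutoff, cutoff, ← Complex.ofReal_sub, Complex.norm_real, Real.norm_eq_abs]
  calc |max (min (2 - ‖n‖ / L) 1) 0 - max (min (2 - ‖m‖ / L) 1) 0|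
      ≤ |min (2 - ‖n‖ / L) 1 - min (2 - ‖m‖ / L) 1| := abs_max_sub_max_le_abs _ _ _
    _ ≤ |2 - ‖n‖ / L - (2 - ‖m‖ / L)| := abs_inf_sub_inf_le_abs _ _ _
    _ = |‖m‖ - ‖n‖| / L := by
        rw [sub_sub_sub_cancel_left, ← sub_div, abs_div, Nat.abs_cast]
    _ ≤ ‖n - m‖ / L := by
        gcongr
        rw [norm_sub_rev]
        exact abs_norm_sub_norm_le m n

theorem norm_cutoff_sub_le_one (n m : Fin d → ℤ) : ‖cutoff d L n - cutoff d L m‖ ≤ 1 := by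
  rw [cutoff, cutoff, ← Complex.ofReal_sub, Complex.norm_real]
  exact abs_sub_le_of_le_of_le (le_max_right _ _) (max_le (min_le_right _ _) zero_le_one)
    (le_max_right _ _) (max_le (min_le_right _ _) zero_le_one) |>.trans_eq (sub_zero 1)

theorem norm_cutoff_sub_sq_le (hγ0 : 0 ≤ γ) (hγ2 : γ ≤ 2) (n m : Fin d → ℤ) :
    ‖cutoff d L n - cutoff d L m‖ ^ 2 ≤ ‖n - m‖ ^ γ * (L : ℝ) ^ (-γ) := by
  rw [Real.rpow_neg L.cast_nonneg, ← div_eq_mul_inv,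
    ← Real.div_rpow (norm_nonneg _) L.cast_nonneg, ← Real.rpow_two]
  calc ‖cutoff d L n - cutoff d L m‖ ^ (2 : ℝ) ≤ ‖cutoff d L n - cutoff d L m‖ ^ γ :=
        Real.rpow_le_rpow_of_exponent_ge' (norm_nonneg _) (norm_cutoff_sub_le_one n m) hγ0 hγ2
    _ ≤ (‖n - m‖ / L) ^ γ := by
        gcongr
        exact norm_cutoff_sub_le_div n m

theorem mass_cutoff_le (hL : 0 < L) : mass d (cutoff d L) ≤ (5 * L) ^ d := by
  have hL' : (1 : ℝ) ≤ L := by exact_mod_cast hL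
  calc mass d (cutoff d L) ≤ (cube d (2 * L)).card :=
        mass_le_card (fun _ ↦ cutoff_eq_zero hL) norm_cutoff_le_one
    _ = (2 * (2 * L) + 1) ^ d := by rw [card_cube, Nat.cast_mul, Nat.cast_ofNat]
    _ ≤ (5 * L) ^ d := by gcongr; linarith

theorem card_cube_two_mul_le_ppot_cutoff (hp : 1 ≤ p) (hL : 0 < L) :
    ((cube d (2 * L)).card : ℝ) ≤ 2 ^ d * ppot d p (cutoff d L) :=
  calc ((cube d (2 * L)).card : ℝ) = (2 * (2 * L) + 1) ^ d := by
        rw [card_cube, Nat.cast_mul, Nat.cast_ofNat]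
    _ ≤ (2 * (2 * L + 1)) ^ d := by gcongr; linarith
    _ = 2 ^ d * (cube d L).card := by rw [mul_pow, card_cube]
    _ ≤ 2 ^ d * ppot d p (cutoff d L) := by
        gcongr
        exact card_le_ppot hp (memL2_cutoff hL) fun n hn ↦ (norm_cutoff_eq_one hn).ge

theorem pairing_cutoff_le (hp : 1 ≤ p) (hJ : ∀ k, 0 ≤ J k) (hγ0 : 0 ≤ γ) (hγ2 : γ ≤ 2)
    (hmom : Summable fun m : Fin d → ℤ ↦ JbarSummand d J m * ‖m‖ ^ γ) (hL : 0 < L) :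
    pairing d J (cutoff d L) ≤ 2 ^ d * ppot d p (cutoff d L) *
      ((∑' m : Fin d → ℤ, JbarSummand d J m * ‖m‖ ^ γ) * (L : ℝ) ^ (-γ)) := by
  have hω : Summable fun m : Fin d → ℤ ↦ JbarSummand d J m * (‖m‖ ^ γ * (L : ℝ) ^ (-γ)) := by
    simpa only [mul_assoc] using hmom.mul_right ((L : ℝ) ^ (-γ))
  refine (pairing_le_card_mul hJ hω (fun _ ↦ cutoff_eq_zero hL)
    (norm_cutoff_sub_sq_le hγ0 hγ2)).trans ?_
  simp only [← mul_assoc (JbarSummand d J _), tsum_mul_right]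
  gcongr
  · exact mul_nonneg
      (tsum_nonneg fun m ↦ mul_nonneg (JbarSummand_nonneg hJ m) (by positivity)) (by positivity)
  · exact card_cube_two_mul_le_ppot_cutoff hp hL

theorem mass_rpow_mul_pairing_cutoff_le (hp : 1 ≤ p) (hJ : ∀ k, 0 ≤ J k) (hγ0 : 0 ≤ γ)
    (hγ2 : γ ≤ 2) (hmom : Summable fun m : Fin d → ℤ ↦ JbarSummand d J m * ‖m‖ ^ γ)
    (hL : 0 < L) :
    mass d (cutoff d L) ^ ((p - 1) / 2) * pairing d J (cutoff d L) ≤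
      5 ^ (d * (p - 1) / 2) * 2 ^ d * (∑' m : Fin d → ℤ, JbarSummand d J m * ‖m‖ ^ γ) *
        (L : ℝ) ^ (d * (p - 1) / 2 - γ) * ppot d p (cutoff d L) := by
  have hL' : (0 : ℝ) < L := by exact_mod_cast hL
  have hmass : mass d (cutoff d L) ^ ((p - 1) / 2) ≤ (5 * L) ^ (d * (p - 1) / 2) := by
    rw [mul_div_assoc, Real.rpow_natCast_mul (by positivity)]
    exact Real.rpow_le_rpow (mass_nonneg _) (mass_cutoff_le hL) (by linarith)
  refine (mul_le_mul hmass (pairing_cutoff_le hp hJ hγ0 hγ2 hmom hL) (pairing_nonneg hJ _)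
    (by positivity)).trans_eq ?_
  rw [Real.mul_rpow (by norm_num) hL'.le, sub_eq_add_neg _ γ, Real.rpow_add hL']
  ring

theorem exists_mass_rpow_mul_pairing_lt (hp : 1 ≤ p) (hJ : ∀ k, 0 ≤ J k)
    (hγ : d * (p - 1) / 2 < γ) (hγ2 : γ ≤ 2)
    (hmom : Summable fun m : Fin d → ℤ ↦ JbarSummand d J m * ‖m‖ ^ γ) {ε : ℝ} (hε : 0 < ε) :
    ∃ u : (Fin d → ℤ) → ℂ, MemL2 d u ∧ u ≠ 0 ∧
      mass d u ^ ((p - 1) / 2) * pairing d J u < ε * ppot d p u := by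
  set C := 5 ^ (d * (p - 1) / 2) * 2 ^ d * ∑' m : Fin d → ℤ, JbarSummand d J m * ‖m‖ ^ γ
  have hγ0 : 0 ≤ γ := by
    have : 0 ≤ p - 1 := sub_nonneg.2 hp
    exact (by positivity : 0 ≤ d * (p - 1) / 2).trans hγ.le
  have hdecay : Tendsto (fun L : ℕ ↦ C * (L : ℝ) ^ (d * (p - 1) / 2 - γ)) atTop (𝓝 0) := by
    simpa [neg_sub, Function.comp_def] using
      ((tendsto_rpow_neg_atTop (sub_pos.2 hγ)).comp tendsto_natCast_atTop_atTop).const_mul C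
  obtain ⟨L, hLε, hL⟩ := ((hdecay.eventually (gt_mem_nhds hε)).and (eventually_gt_atTop 0)).exists
  have hne : cutoff d L ≠ 0 := by
    have hnorm : ‖cutoff d L 0‖ = 1 := norm_cutoff_eq_one (mem_cube.2 (by simp))
    exact fun h ↦ by simp [h] at hnorm
  refine ⟨cutoff d L, memL2_cutoff hL, hne,
    (mass_rpow_mul_pairing_cutoff_le hp hJ hγ0 hγ2 hmom hL).trans_lt ?_⟩
  have := ppot_pos hp (memL2_cutoff hL) hne
  gcongr

end TestFunctions

section Threshold

variable {d : ℕ} {J : ℕ → ℝ} {p ν : ℝ}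

theorem Kconst_eq_zero (hp : 1 ≤ p) (hJ : ∀ k, 0 ≤ J k) {γ : ℝ} (hγ : d * (p - 1) / 2 < γ)
    (hγ2 : γ ≤ 2) (hmom : Summable fun m : Fin d → ℤ ↦ JbarSummand d J m * ‖m‖ ^ γ) :
    Kconst d J p = 0 := by
  have quotient_nonneg : ∀ x ∈ {x : ℝ | ∃ u : (Fin d → ℤ) → ℂ, MemL2 d u ∧ u ≠ 0 ∧
      x = mass d u ^ ((p - 1) / 2) * pairing d J u / ppot d p u}, 0 ≤ x := by
    rintro _ ⟨u, -, -, rfl⟩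
    exact div_nonneg (mul_nonneg (Real.rpow_nonneg (mass_nonneg u) _) (pairing_nonneg hJ u))
      (ppot_nonneg p u)
  refine le_antisymm (le_of_forall_gt fun ε hε ↦ ?_) (Real.sInf_nonneg quotient_nonneg)
  obtain ⟨u, hu, hu0, h⟩ := exists_mass_rpow_mul_pairing_lt hp hJ hγ hγ2 hmom hε
  exact (csInf_le ⟨0, quotient_nonneg⟩ ⟨u, hu, hu0, rfl⟩).trans_lt
    ((div_lt_iff₀ (ppot_pos hp hu hu0)).2 h)

theorem exists_mass_rpow_mul_pairing_lt_of_Kconst_lt (hp : 1 ≤ p) {ε : ℝ}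
    (hK : Kconst d J p < ε) :
    ∃ u : (Fin d → ℤ) → ℂ, MemL2 d u ∧ u ≠ 0 ∧
      mass d u ^ ((p - 1) / 2) * pairing d J u < ε * ppot d p u := by
  -- An empty set of quotients would have the junk infimum `0`.
  have nonempty : {x : ℝ | ∃ u : (Fin d → ℤ) → ℂ, MemL2 d u ∧ u ≠ 0 ∧
      x = mass d u ^ ((p - 1) / 2) * pairing d J u / ppot d p u}.Nonempty :=
    ⟨_, Pi.single 0 1,
      memL2_of_eq_zero_off (S := {0}) fun n hn ↦ Pi.single_eq_of_ne (by simpa using hn) 1,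
      by simp, rfl⟩
  obtain ⟨_, ⟨u, hu, hu0, rfl⟩, h⟩ := exists_lt_of_csInf_lt nonempty hK
  exact ⟨u, hu, hu0, (div_lt_iff₀ (ppot_pos hp hu hu0)).1 h⟩

theorem not_GNineq (hp : 1 ≤ p) (hK : Kconst d J p = 0) (hν : 0 < ν) : ¬ GNineq d J p ν := by
  intro hGN
  have hC : 0 < (p + 1) / 2 * ν ^ (-(p - 1) / 2) := by positivity
  obtain ⟨u, hu, -, h⟩ := exists_mass_rpow_mul_pairing_lt_of_Kconst_lt hp
    (hK.trans_lt (inv_pos.2 hC))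
  rw [lt_inv_mul_iff₀ hC, ← mul_assoc] at h
  exact h.not_ge (hGN u hu)

theorem nuZero_eq_zero (hp : 1 ≤ p) (hK : Kconst d J p = 0) : nuZero d J p = 0 := by
  have : {ν : ℝ | 0 < ν ∧ GNineq d J p ν} = ∅ :=
    Set.eq_empty_of_forall_notMem fun _ h ↦ not_GNineq hp hK h.1 h.2
  rw [nuZero, this, insert_empty_eq, csSup_singleton]

theorem neg_le_energy (hp : 1 ≤ p) (hJ : ∀ k, 0 ≤ J k) {u : (Fin d → ℤ) → ℂ} (hu : MemL2 d u)
    {δ : ℝ} (hδ : ∀ n, ‖u n‖ ≤ δ) : -(1 / (p + 1) * (δ ^ (p - 1) * mass d u)) ≤ energy d J p u := by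
  have hppot : 1 / (p + 1) * ppot d p u ≤ 1 / (p + 1) * (δ ^ (p - 1) * mass d u) := by
    gcongr
    exact ppot_le hp hu hδ
  unfold energy
  linarith [pairing_nonneg hJ u]

theorem bddBelow_energy (hp : 1 ≤ p) (hJ : ∀ k, 0 ≤ J k) (ν : ℝ) :
    BddBelow {x : ℝ | ∃ q, MemL2 d q ∧ mass d q = ν ∧ energy d J p q = x} := by
  refine ⟨-(1 / (p + 1) * (√ν ^ (p - 1) * ν)), ?_⟩
  rintro _ ⟨q, hq, rfl, rfl⟩
  exact neg_le_energy hp hJ hq hq.norm_le_sqrt_mass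

theorem Ifun_le_energy (hp : 1 ≤ p) (hJ : ∀ k, 0 ≤ J k) {q : (Fin d → ℤ) → ℂ} (hq : MemL2 d q) :
    Ifun d J p (mass d q) ≤ energy d J p q :=
  csInf_le (bddBelow_energy hp hJ _) ⟨q, hq, rfl, rfl⟩

theorem Ifun_le_energy_sqrt_smul (hp : 1 ≤ p) (hJ : ∀ k, 0 ≤ J k) (hν : 0 ≤ ν)
    {q : (Fin d → ℤ) → ℂ} (hq : MemL2 d q) (hq0 : q ≠ 0) :
    Ifun d J p ν ≤ energy d J p (√(ν / mass d q) • q) := by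
  simpa only [mass_sqrt_div_mass_smul hq hq0 hν] using
    Ifun_le_energy hp hJ (hq.smul √(ν / mass d q))

theorem Ifun_neg (hp : 1 ≤ p) (hJ : ∀ k, 0 ≤ J k) (hK : Kconst d J p = 0) (hν : 0 < ν) :
    Ifun d J p ν < 0 := by
  have hε : 0 < 2 / (p + 1) * ν ^ ((p - 1) / 2) := by positivity
  obtain ⟨u, hu, hu0, h⟩ := exists_mass_rpow_mul_pairing_lt_of_Kconst_lt hp (hK.trans_lt hε)
  have hmass := mass_pos hu hu0
  have hpow : 0 < mass d u ^ ((p - 1) / 2) := by positivity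
  refine (Ifun_le_energy_sqrt_smul hp hJ hν.le hu hu0).trans_lt ?_
  rw [energy_sqrt_smul (by positivity), Real.div_rpow hν.le hmass.le]
  refine mul_neg_of_pos_of_neg (by positivity) ?_
  rw [mul_comm, ← lt_div_iff₀ hpow] at h
  linear_combination 1 / 2 * h

end Threshold

section Subadditivity

variable {d : ℕ} {J : ℕ → ℝ} {p ν : ℝ} {q : (Fin d → ℤ) → ℂ}

theorem mass_div_mul_Ifun_le_energy (hp : 1 ≤ p) (hJ : ∀ k, 0 ≤ J k) (hq : MemL2 d q)
    (hν : mass d q ≤ ν) : mass d q / ν * Ifun d J p ν ≤ energy d J p q := by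
  rcases eq_or_ne q 0 with rfl | hq0
  · have hmass : mass d (0 : (Fin d → ℤ) → ℂ) = 0 := by simp [mass]
    simpa [hmass] using neg_le_energy hp hJ hq (δ := 0) (by simp)
  have hmass := mass_pos hq hq0
  have hν0 : 0 < ν := hmass.trans_le hν
  have hI : Ifun d J p ν ≤ ν / mass d q * energy d J p q :=
    (Ifun_le_energy_sqrt_smul hp hJ hν0.le hq hq0).trans
      (energy_sqrt_smul_le hp ((one_le_div hmass).2 hν) q)
  calc mass d q / ν * Ifun d J p ν ≤ mass d q / ν * (ν / mass d q * energy d J p q) := by gcongr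
    _ = energy d J p q := by field_simp

theorem mass_div_mul_Ifun_lt_energy (hp : 1 < p) (hJ : ∀ k, 0 ≤ J k) (hq : MemL2 d q)
    (hq0 : q ≠ 0) (hν : mass d q < ν) : mass d q / ν * Ifun d J p ν < energy d J p q := by
  have hmass := mass_pos hq hq0
  have hν0 : 0 < ν := hmass.trans hν
  have hI : Ifun d J p ν < ν / mass d q * energy d J p q :=
    (Ifun_le_energy_sqrt_smul hp.le hJ hν0.le hq hq0).trans_lt
      (energy_sqrt_smul_lt hp hq hq0 ((one_lt_div hmass).2 hν))
  calc mass d q / ν * Ifun d J p ν < mass d q / ν * (ν / mass d q * energy d J p q) := by gcongr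
    _ = energy d J p q := by field_simp

end Subadditivity

section Splitting

variable {d : ℕ} {J : ℕ → ℝ} {p B : ℝ} {κ : Type*} {l : Filter κ}
  {q : (Fin d → ℤ) → ℂ} {r : κ → (Fin d → ℤ) → ℂ}

theorem tendsto_mass_add_sub (hq : MemL2 d q) (hr : ∀ k, MemL2 d (r k))
    (hB : ∀ k, mass d (r k) ≤ B) (hlim : ∀ n, Tendsto (fun k ↦ r k n) l (𝓝 0)) :
    Tendsto (fun k ↦ mass d (q + r k) - mass d q - mass d (r k)) l (𝓝 0) :=
  tendsto_tsum_norm_add_sq_sub hq hr hB hlim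

theorem tendsto_pairing_add_sub (hJ : ∀ k, 0 ≤ J k) (hJbar : Summable (JbarSummand d J))
    (hq : MemL2 d q) (hr : ∀ k, MemL2 d (r k)) (hB : ∀ k, mass d (r k) ≤ B)
    (hlim : ∀ n, Tendsto (fun k ↦ r k n) l (𝓝 0)) :
    Tendsto (fun k ↦ pairing d J (q + r k) - pairing d J q - pairing d J (r k)) l (𝓝 0) := by
  have pairing_eq {u : (Fin d → ℤ) → ℂ} (hu : MemL2 d u) :=
    pairing_eq_tsum_weightedDiff hJ (hu.summable_weightedDiff hJ hJbar)
  have hbdd (k : κ) : ∑' z, ‖weightedDiff d J (r k) z‖ ^ 2 ≤ 2 * (2 * (B * Jbar d J)) := by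
    have hle := pairing_le hJ hJbar (hr k)
    have hJbar0 : 0 ≤ Jbar d J := tsum_nonneg (JbarSummand_nonneg hJ)
    have := mul_le_mul_of_nonneg_right (hB k) hJbar0
    rw [pairing_eq (hr k)] at hle
    linarith
  have hlim' (z : (Fin d → ℤ) × (Fin d → ℤ)) :
      Tendsto (fun k ↦ weightedDiff d J (r k) z) l (𝓝 0) := by
    simpa [weightedDiff] using ((hlim z.1).sub (hlim z.2)).const_smul √(JbarSummand d J (z.1 - z.2))
  have hsplit := (tendsto_tsum_norm_add_sq_sub (hq.summable_weightedDiff hJ hJbar)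
    (fun k ↦ (hr k).summable_weightedDiff hJ hJbar) hbdd hlim').const_mul (1 / 2)
  rw [mul_zero] at hsplit
  refine hsplit.congr fun k ↦ ?_
  simp only [pairing_eq hq, pairing_eq (hr k), pairing_eq (hq.add (hr k)), weightedDiff_add]
  ring

theorem ppot_add_le (hp : 1 ≤ p) {u v : (Fin d → ℤ) → ℂ} (hu : MemL2 d u) (hv : MemL2 d v)
    {R : ℝ} (huR : ∀ n, ‖u n‖ ≤ R) (hvR : ∀ n, ‖v n‖ ≤ R) :
    ppot d p (u + v) ≤ ppot d p u + ppot d p v +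
      2 * (p + 1) * (2 * R) ^ (p - 1) * ∑' n, ‖u n‖ * ‖v n‖ := by
  have hcross : Summable fun n ↦ ‖u n‖ * ‖v n‖ :=
    summable_mul_of_sq (fun n ↦ norm_nonneg (u n)) (fun n ↦ norm_nonneg (v n)) hu hv
  refine hasSum_le (fun n ↦ ?_) ((hu.add hv).summable_rpow hp).hasSum
    (((hu.summable_rpow hp).hasSum.add (hv.summable_rpow hp).hasSum).add
      (hcross.hasSum.mul_left _))
  calc ‖u n + v n‖ ^ (p + 1) ≤ (‖u n‖ + ‖v n‖) ^ (p + 1) := by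
        gcongr
        exact norm_add_le _ _
    _ ≤ ‖u n‖ ^ (p + 1) + ‖v n‖ ^ (p + 1) +
          2 * (p + 1) * (2 * R) ^ (p - 1) * (‖u n‖ * ‖v n‖) := by
        convert rpow_add_le_rpow_add_rpow_add (s := p + 1) (by linarith) (norm_nonneg _)
          (norm_nonneg _) (huR n) (hvR n) using 5
        ring

theorem exists_tendsto_zero_energy_add_le (hp : 1 ≤ p) (hJ : ∀ k, 0 ≤ J k)
    (hJbar : Summable (JbarSummand d J)) (hq : MemL2 d q) (hr : ∀ k, MemL2 d (r k))
    (hB : ∀ k, mass d (r k) ≤ B) (hlim : ∀ n, Tendsto (fun k ↦ r k n) l (𝓝 0)) :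
    ∃ e : κ → ℝ, Tendsto e l (𝓝 0) ∧
      ∀ k, energy d J p q + energy d J p (r k) ≤ energy d J p (q + r k) + e k := by
  set R := max √(mass d q) √B
  have hqR (n : Fin d → ℤ) : ‖q n‖ ≤ R := (hq.norm_le_sqrt_mass n).trans (le_max_left _ _)
  have hrR (k : κ) (n : Fin d → ℤ) : ‖r k n‖ ≤ R :=
    ((hr k).norm_le_sqrt_mass n).trans ((Real.sqrt_le_sqrt (hB k)).trans (le_max_right _ _))
  have hpairing := (tendsto_pairing_add_sub hJ hJbar hq hr hB hlim).const_mul (1 / 2)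
  have hppot := (tendsto_tsum_norm_mul_norm hq hr hB hlim).const_mul
    (1 / (p + 1) * (2 * (p + 1) * (2 * R) ^ (p - 1)))
  refine ⟨_, by simpa only [mul_zero, sub_zero] using hppot.sub hpairing, fun k ↦ ?_⟩
  have := mul_le_mul_of_nonneg_left (ppot_add_le hp hq (hr k) hqR (hrR k))
    (show 0 ≤ 1 / (p + 1) by positivity)
  unfold energy
  linarith

end Splitting

section Compactness

variable {d : ℕ} {ν : ℝ}

theorem exists_subseq_tendsto_pointwise {u : ℕ → (Fin d → ℤ) → ℂ} (hu : ∀ k, MemL2 d (u k))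
    (hν : ∀ k, mass d (u k) ≤ ν) :
    ∃ q : (Fin d → ℤ) → ℂ, ∃ φ : ℕ → ℕ, StrictMono φ ∧
      ∀ n, Tendsto (fun k ↦ u (φ k) n) atTop (𝓝 (q n)) := by
  have compact : IsCompact
      (Set.univ.pi fun _ : Fin d → ℤ ↦ Metric.closedBall (0 : ℂ) √ν) :=
    isCompact_univ_pi fun _ ↦ isCompact_closedBall _ _
  obtain ⟨q, -, φ, hφ, hlim⟩ := compact.tendsto_subseq (x := u) fun k n _ ↦
    mem_closedBall_zero_iff.2 (((hu k).norm_le_sqrt_mass n).trans (Real.sqrt_le_sqrt (hν k)))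
  exact ⟨q, φ, hφ, tendsto_pi_nhds.1 hlim⟩

theorem memL2_and_mass_le_of_tendsto {κ : Type*} {l : Filter κ} [l.NeBot]
    {u : κ → (Fin d → ℤ) → ℂ} {q : (Fin d → ℤ) → ℂ} (hu : ∀ k, MemL2 d (u k))
    (hν : ∀ k, mass d (u k) ≤ ν) (hlim : ∀ n, Tendsto (fun k ↦ u k n) l (𝓝 (q n))) :
    MemL2 d q ∧ mass d q ≤ ν := by
  have sum_le (F : Finset (Fin d → ℤ)) : ∑ n ∈ F, ‖q n‖ ^ 2 ≤ ν :=
    le_of_tendsto' (tendsto_finsetSum F fun n _ ↦ (hlim n).norm.pow 2) fun k ↦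
      (Summable.sum_le_tsum F (fun _ _ ↦ sq_nonneg _) (hu k)).trans (hν k)
  have hq : MemL2 d q := summable_of_sum_le (fun _ ↦ sq_nonneg _) sum_le
  exact ⟨hq, Summable.tsum_le_of_sum_le hq sum_le⟩

end Compactness

/-- Minimizing sequences for the variational problem defining `I_ν`. -/
structure IsMinimizingSeq (d : ℕ) (J : ℕ → ℝ) (p ν : ℝ) (u : ℕ → (Fin d → ℤ) → ℂ) : Prop where
  memL2 (k : ℕ) : MemL2 d (u k)
  mass_eq (k : ℕ) : mass d (u k) = ν
  tendsto_energy : Tendsto (fun k ↦ energy d J p (u k)) atTop (𝓝 (Ifun d J p ν))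

section MinimizingSequences

variable {d : ℕ} {J : ℕ → ℝ} {p ν : ℝ} {u : ℕ → (Fin d → ℤ) → ℂ} {q : (Fin d → ℤ) → ℂ}

theorem exists_isMinimizingSeq (hp : 1 ≤ p) (hJ : ∀ k, 0 ≤ J k) (hI : Ifun d J p ν < 0) :
    ∃ u, IsMinimizingSeq d J p ν u := by
  -- An empty set of energies would have the junk infimum `0`.
  have nonempty : {x : ℝ | ∃ q, MemL2 d q ∧ mass d q = ν ∧ energy d J p q = x}.Nonempty := by
    by_contra! h
    exact hI.ne (by rw [Ifun, h, Real.sInf_empty])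
  obtain ⟨x, -, hx, hmem⟩ := exists_seq_tendsto_sInf nonempty (bddBelow_energy hp hJ ν)
  choose u hu hmass henergy using hmem
  exact ⟨u, hu, hmass, by simpa only [henergy, Ifun] using hx⟩

theorem IsMinimizingSeq.comp (hu : IsMinimizingSeq d J p ν u) {φ : ℕ → ℕ}
    (hφ : Tendsto φ atTop atTop) : IsMinimizingSeq d J p ν (u ∘ φ) where
  memL2 k := hu.memL2 (φ k)
  mass_eq k := hu.mass_eq (φ k)
  tendsto_energy := hu.tendsto_energy.comp hφ

theorem IsMinimizingSeq.translate (hu : IsMinimizingSeq d J p ν u) (a : ℕ → Fin d → ℤ) :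
    IsMinimizingSeq d J p ν fun k n ↦ u k (n + a k) where
  memL2 k := (hu.memL2 k).comp_add_right (a k)
  mass_eq k := by rw [mass_comp_add_right, hu.mass_eq]
  tendsto_energy := by simpa only [energy_comp_add_right] using hu.tendsto_energy

theorem IsMinimizingSeq.eventually_exists_le_norm (hp : 1 < p) (hJ : ∀ k, 0 ≤ J k) (hν : 0 < ν)
    (hI : Ifun d J p ν < 0) (hu : IsMinimizingSeq d J p ν u) :
    ∃ δ > 0, ∀ᶠ k in atTop, ∃ a, δ ≤ ‖u k a‖ := by
  set c := (p + 1) * (-Ifun d J p ν) / (2 * ν) with hc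
  have hc0 : 0 < c := div_pos (mul_pos (by linarith) (neg_pos.2 hI)) (by positivity)
  have hδ : (c ^ (p - 1)⁻¹) ^ (p - 1) = c := Real.rpow_inv_rpow hc0.le (sub_pos.2 hp).ne'
  refine ⟨c ^ (p - 1)⁻¹, Real.rpow_pos_of_pos hc0 _, ?_⟩
  have hhalf : Ifun d J p ν < Ifun d J p ν / 2 := by linarith
  filter_upwards [hu.tendsto_energy.eventually_lt_const hhalf] with k hk
  by_contra! hsmall
  have hle := neg_le_energy hp.le hJ (hu.memL2 k) fun n ↦ (hsmall n).le
  have hbound : -(1 / (p + 1) * (c * ν)) = Ifun d J p ν / 2 := by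
    rw [hc]
    field_simp
  rw [hδ, hu.mass_eq, hbound] at hle
  exact hle.not_gt hk

theorem exists_isMinimizingSeq_le_norm_zero (hp : 1 < p) (hJ : ∀ k, 0 ≤ J k) (hν : 0 < ν)
    (hI : Ifun d J p ν < 0) :
    ∃ u, IsMinimizingSeq d J p ν u ∧ ∃ δ > 0, ∀ k, δ ≤ ‖u k 0‖ := by
  obtain ⟨u, hu⟩ := exists_isMinimizingSeq hp.le hJ hI
  obtain ⟨δ, hδ, hlarge⟩ := hu.eventually_exists_le_norm hp hJ hν hI
  obtain ⟨N, hN⟩ := eventually_atTop.1 hlarge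
  choose a ha using fun k ↦ hN (k + N) (Nat.le_add_left N k)
  exact ⟨_, (hu.comp (tendsto_add_atTop_nat N)).translate a, δ, hδ, fun k ↦ by simpa using ha k⟩

theorem IsMinimizingSeq.energy_le_of_tendsto (hp : 1 ≤ p) (hJ : ∀ k, 0 ≤ J k)
    (hJbar : Summable (JbarSummand d J)) (hν : 0 < ν) (hu : IsMinimizingSeq d J p ν u)
    (hq : MemL2 d q) (hq0 : q ≠ 0) (hlim : ∀ n, Tendsto (fun k ↦ u k n) atTop (𝓝 (q n))) :
    energy d J p q ≤ mass d q / ν * Ifun d J p ν := by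
  set r : ℕ → (Fin d → ℤ) → ℂ := fun k ↦ u k - q with hr
  have add_r (k : ℕ) : q + r k = u k := add_sub_cancel q (u k)
  have hrL2 (k : ℕ) : MemL2 d (r k) := (hu.memL2 k).sub hq
  have hrB (k : ℕ) : mass d (r k) ≤ 2 * (ν + mass d q) := by
    simpa only [hu.mass_eq] using mass_sub_le (hu.memL2 k) hq
  have hr0 (n : Fin d → ℤ) : Tendsto (fun k ↦ r k n) atTop (𝓝 0) := by
    simpa only [hr, Pi.sub_apply, sub_self] using (hlim n).sub_const (q n)
  have hmass_r : Tendsto (fun k ↦ mass d (r k)) atTop (𝓝 (ν - mass d q)) := by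
    have := (tendsto_mass_add_sub hq hrL2 hrB hr0).const_sub (ν - mass d q)
    simpa only [add_r, hu.mass_eq, sub_sub_cancel, sub_zero] using this
  obtain ⟨e, he, hsplit⟩ := exists_tendsto_zero_energy_add_le hp hJ hJbar hq hrL2 hrB hr0
  have hbound : Tendsto
      (fun k ↦ energy d J p (u k) + e k - mass d (r k) / ν * Ifun d J p ν) atTop
      (𝓝 (Ifun d J p ν + 0 - (ν - mass d q) / ν * Ifun d J p ν)) :=
    (hu.tendsto_energy.add he).sub ((hmass_r.div_const ν).mul_const _)
  have hle : energy d J p q ≤ Ifun d J p ν + 0 - (ν - mass d q) / ν * Ifun d J p ν := by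
    refine ge_of_tendsto hbound ?_
    filter_upwards [hmass_r.eventually_lt_const (sub_lt_self ν (mass_pos hq hq0))] with k hk
    have hsplit_k := hsplit k
    rw [add_r] at hsplit_k
    linarith [mass_div_mul_Ifun_le_energy hp hJ (hrL2 k) hk.le]
  refine hle.trans_eq ?_
  field_simp
  ring

theorem exists_energy_eq_Ifun (hp : 1 < p) (hJ : ∀ k, 0 ≤ J k)
    (hJbar : Summable (JbarSummand d J)) (hν : 0 < ν) (hI : Ifun d J p ν < 0) :
    ∃ q : (Fin d → ℤ) → ℂ, MemL2 d q ∧ mass d q = ν ∧ energy d J p q = Ifun d J p ν := by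
  obtain ⟨u, hu, δ, hδ, hδu⟩ := exists_isMinimizingSeq_le_norm_zero hp hJ hν hI
  obtain ⟨q, φ, hφ, hlim⟩ :=
    exists_subseq_tendsto_pointwise hu.memL2 fun k ↦ (hu.mass_eq k).le
  have hu' := hu.comp hφ.tendsto_atTop
  obtain ⟨hq, hqν⟩ := memL2_and_mass_le_of_tendsto hu'.memL2 (fun k ↦ (hu'.mass_eq k).le) hlim
  have hq0 : q ≠ 0 := by
    rintro rfl
    have : δ ≤ ‖(0 : ℂ)‖ := ge_of_tendsto' (hlim 0).norm fun k ↦ hδu (φ k)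
    exact hδ.not_ge (by simpa using this)
  have hle := hu'.energy_le_of_tendsto hp.le hJ hJbar hν hq hq0 hlim
  obtain rfl : mass d q = ν := hqν.eq_or_lt.resolve_right fun hlt ↦
    hle.not_gt (mass_div_mul_Ifun_lt_energy hp hJ hq hq0 hlt)
  rw [div_self hν.ne', one_mul] at hle
  exact ⟨q, hq, rfl, hle.antisymm (Ifun_le_energy hp.le hJ hq)⟩

end MinimizingSequences

theorem stmt6_general (d : ℕ) {p : ℝ} (hp : 1 < p) {J : ℕ → ℝ} (hJ : ∀ k, 0 ≤ J k) {γ : ℝ}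
    (hpγ : d * (p - 1) / 2 < γ) (hγ2 : γ ≤ 2)
    (hmom : Summable fun m : Fin d → ℤ ↦ JbarSummand d J m * ‖m‖ ^ γ) :
    Kconst d J p = 0 ∧ nuZero d J p = 0 ∧
      ∀ ν : ℝ, 0 < ν → Ifun d J p ν < 0 ∧
        ∃ q : (Fin d → ℤ) → ℂ, MemL2 d q ∧ mass d q = ν ∧
          energy d J p q = Ifun d J p ν := by
  have hγ0 : 0 ≤ γ := (div_nonneg (mul_nonneg d.cast_nonneg (by linarith)) two_pos.le).trans hpγ.le
  have hJbar : Summable (JbarSummand d J) := summable_JbarSummand_of_moment hJ hγ0 hmom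
  have hK : Kconst d J p = 0 := Kconst_eq_zero hp.le hJ hpγ hγ2 hmom
  refine ⟨hK, nuZero_eq_zero hp.le hK, fun ν hν ↦ ?_⟩
  have hI : Ifun d J p ν < 0 := Ifun_neg hp.le hJ hK hν
  exact ⟨hI, exists_energy_eq_Ifun hp hJ hJbar hν hI⟩

theorem stmt6 (d : ℕ) (hd : 1 ≤ d) (p : ℝ) (hp : 1 < p) (J : ℕ → ℝ)
    (hJpos : ∀ k, 0 ≤ J k) (hJbar : Summable (JbarSummand d J)) (hJ1 : 0 < J 1)
    (α : ℝ≥0∞) (hα : 0 < α) (horder : JOrder d J α)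
    (hpsub : p < 1 + 4 * alphaPrime α / d) :
    Kconst d J p = 0 ∧ nuZero d J p = 0 ∧
      ∀ ν : ℝ, 0 < ν → Ifun d J p ν < 0 ∧
        ∃ q : (Fin d → ℤ) → ℂ, MemL2 d q ∧ mass d q = ν ∧
          energy d J p q = Ifun d J p ν := by
  obtain ⟨γ, hpγ, hγ2, hmom⟩ := exists_summable_moment hd hJpos horder hpsub
  exact stmt6_general d hp hJpos hpγ hγ2 hmom
end
end

section
/- Let γ ∈ (0,2) and β > −1, and for ρ > 0 define F_ρ(ξ) = Σ_{n ∈ Z} e^{−ρ|n|^γ} cos(nξ) for ξ ∈ [−π,π]. Then there exist constants c, C, ρ₀ > 0 depending on β and γ such that for all ρ ∈ (0, ρ₀), c · g(ρ) ≤ ∫_{−π}^{π} |ξ|^β F_ρ(ξ)² dξ ≤ C · g(ρ), where g(ρ) = ρ^{(β−1)/γ} if −1 < β < 1+2γ, g(ρ) = ρ² |log ρ| if β = 1+2γ, and g(ρ) = ρ² if β > 1+2γ. -/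
noncomputable section

/-- `F_ρ(ξ) = Σ_{n ∈ ℤ} e^{-ρ|n|^γ} cos(nξ)`, the discrete Fourier transform of
`u_n = e^{-ρ|n|^γ}`. -/
def Frho (γ ρ ξ : ℝ) : ℝ := ∑' n : ℤ, Real.exp (-ρ * |(n : ℝ)| ^ γ) * Real.cos (n * ξ)

/-!
With `h = ρ^{1/γ}`, the function `F_ρ` has size `1/h` for `|ξ| ≲ h` and size `ρ|ξ|^{-1-γ}` beyond,
so that `g(ρ)` is, up to constants, `ρ² (h^{β-1-2γ} + ∫_h^1 ξ^{β-2-2γ} dξ)`.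

Upper bound: the second difference with step `m` multiplies a Fourier series by `2 - 2 cos mξ`.
Applying it twice with `m ≈ π/ξ` gives a factor at least `1`, while the fourth difference of
`e^{-ρ|x|^γ}` is `O(ρ m⁴ (m + |x|)^{γ-4})`, which sums to `O(ρ m^{1+γ})`.

Lower bound: `∫ (2 - 2 cos mξ) F_ρ` is the zeroth coefficient of the second difference, a multiple
of `1 - e^{-ρm^γ} ≈ ρm^γ`. The upper bound forces a fixed proportion of this mass into `ξ ≈ 1/m`;
Cauchy–Schwarz converts it into a bound on `∫ ξ^β F_ρ²` over that annulus, and one sums over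
`m = M, M², …, M^J ≈ 1/h`.
-/

section Development

open Real Set Filter MeasureTheory Topology
open scoped Interval

section Series

variable {a b : ℤ → ℝ} {g : ℝ → ℝ}

theorem summable_int_comp_abs (anti : AntitoneOn g (Ici 0)) (integrable : IntegrableOn g (Ioi 0))
    (nonneg : ∀ t ∈ Ioi 0, 0 ≤ g t) : Summable fun n : ℤ ↦ g |(n : ℝ)| := by
  have h := anti.summable_of_integrableOn_Ioi_zero integrable nonneg
  exact .of_nat_of_neg (by simpa using h) (by simpa using h)

theorem tsum_int_comp_abs_le (anti : AntitoneOn g (Ici 0)) (integrable : IntegrableOn g (Ioi 0))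
    (nonneg : ∀ t ∈ Ioi 0, 0 ≤ g t) :
    ∑' n : ℤ, g |(n : ℝ)| ≤ g 0 + 2 * ∫ t in Ioi 0, g t := by
  have h := anti.summable_of_integrableOn_Ioi_zero integrable nonneg
  have hneg (n : ℕ) : g |((-((n : ℤ) + 1) : ℤ) : ℝ)| = g (n + 1 : ℕ) := by
    rw [Int.cast_neg, abs_neg]
    push_cast
    rw [abs_of_nonneg (by positivity)]
  have hpos (n : ℕ) : g |((n : ℤ) : ℝ)| = g n := by simp
  rw [tsum_of_nat_of_neg_add_one (by simpa only [hpos] using h)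
    (by simpa only [hneg] using (summable_nat_add_iff 1).2 h)]
  simp only [hpos, hneg]
  linarith [anti.tsum_le_integral integrable nonneg,
    anti.tsum_add_one_le_integral integrable nonneg]

/-- The real-valued Fourier series on `ℤ` with coefficients `a`; for even `a` this is the usual
series `∑ aₙ e^{inξ}`. -/
def cosSeries (a : ℤ → ℝ) (ξ : ℝ) : ℝ := ∑' n : ℤ, a n * cos (n * ξ)

theorem abs_mul_cos_le (x y : ℝ) : |x * cos y| ≤ |x| := by
  rw [abs_mul]
  exact mul_le_of_le_one_right (abs_nonneg _) (abs_cos_le_one _)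

theorem summable_mul_cos (ha : Summable a) (θ : ℤ → ℝ) : Summable fun n ↦ a n * cos (θ n) :=
  .of_norm_bounded ha.abs fun _ ↦ abs_mul_cos_le _ _

theorem abs_cosSeries_le (hb : Summable b) (hab : ∀ n, |a n| ≤ b n) (ξ : ℝ) :
    |cosSeries a ξ| ≤ ∑' n, b n :=
  tsum_of_norm_bounded (f := fun n ↦ a n * cos (n * ξ)) hb.hasSum fun n ↦
    (abs_mul_cos_le _ _).trans (hab n)

theorem cosSeries_neg (ξ : ℝ) : cosSeries a (-ξ) = cosSeries a ξ := by
  simp only [cosSeries, mul_neg, cos_neg]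

theorem continuous_cosSeries (ha : Summable a) : Continuous (cosSeries a) :=
  continuous_tsum (fun _ ↦ by fun_prop) ha.abs fun _ _ ↦ abs_mul_cos_le _ _

theorem integral_cos_int_mul (n : ℤ) : ∫ ξ in 0..π, cos (n * ξ) = if n = 0 then π else 0 := by
  split_ifs with hn
  · simp [hn]
  · rw [intervalIntegral.integral_comp_mul_left cos (Int.cast_ne_zero.2 hn), integral_cos]
    simp

theorem integral_cosSeries (ha : Summable a) : ∫ ξ in 0..π, cosSeries a ξ = π * a 0 := by
  have h := intervalIntegral.hasSum_integral_of_dominated_convergence (μ := volume)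
    (a := 0) (b := π) (F := fun (n : ℤ) ξ ↦ a n * cos (n * ξ)) (f := cosSeries a) (fun n _ ↦ |a n|)
    (fun n ↦ (by fun_prop : Continuous _).aestronglyMeasurable)
    (fun n ↦ ae_of_all _ fun ξ _ ↦ abs_mul_cos_le _ _) (ae_of_all _ fun _ _ ↦ ha.abs)
    intervalIntegrable_const (ae_of_all _ fun ξ _ ↦ (summable_mul_cos ha fun n ↦ n * ξ).hasSum)
  simp only [intervalIntegral.integral_const_mul, integral_cos_int_mul, mul_ite, mul_zero] at h
  rw [← h.tsum_eq, tsum_ite_eq, mul_comm]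

/-- The second central difference with step `h`, with the sign that makes it a positive operator:
it multiplies Fourier series by the symbol `2 - 2 cos (hξ)`. -/
def secondDiff {G : Type*} [AddCommGroup G] (h : G) (f : G → ℝ) (x : G) : ℝ :=
  2 * f x - f (x + h) - f (x - h)

theorem summable_secondDiff (ha : Summable a) (m : ℤ) : Summable (secondDiff m a) :=
  ((ha.mul_left 2).sub ((Equiv.addRight m).summable_iff.2 ha)).sub
    ((Equiv.subRight m).summable_iff.2 ha)

theorem hasSum_add_right_mul_cos (ha : Summable a) (m : ℤ) (ξ : ℝ) :
    HasSum (fun n : ℤ ↦ a (n + m) * cos (n * ξ))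
      (cos (m * ξ) * cosSeries a ξ + sin (m * ξ) * ∑' n : ℤ, a n * sin (n * ξ)) := by
  have hcos := (summable_mul_cos ha fun n ↦ n * ξ).hasSum
  have hsin : Summable fun n : ℤ ↦ a n * sin (n * ξ) := by
    simpa only [cos_sub_pi_div_two] using summable_mul_cos ha fun n ↦ n * ξ - π / 2
  have h := (Equiv.addRight m).hasSum_iff.2
    ((hcos.mul_left (cos (m * ξ))).add (hsin.hasSum.mul_left (sin (m * ξ))))
  refine h.congr_fun fun n ↦ ?_
  have hn : (n : ℝ) * ξ = (n + m : ℤ) * ξ - m * ξ := by push_cast; ring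
  rw [hn, cos_sub, Function.comp_apply, Equiv.coe_addRight]
  ring

theorem cosSeries_secondDiff (ha : Summable a) (m : ℤ) (ξ : ℝ) :
    cosSeries (secondDiff m a) ξ = (2 - 2 * cos (m * ξ)) * cosSeries a ξ := by
  have hcos := (summable_mul_cos ha fun n ↦ n * ξ).hasSum
  have h := ((hcos.mul_left 2).sub (hasSum_add_right_mul_cos ha m ξ)).sub
    (hasSum_add_right_mul_cos ha (-m) ξ)
  have hterm (n : ℤ) : secondDiff m a n * cos (n * ξ) =
      2 * (a n * cos (n * ξ)) - a (n + m) * cos (n * ξ) - a (n + -m) * cos (n * ξ) := by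
    rw [secondDiff, sub_eq_add_neg n m]
    ring
  rw [cosSeries, tsum_congr hterm, h.tsum_eq, ← cosSeries, Int.cast_neg, neg_mul, cos_neg, sin_neg]
  ring

end Series

section AddRpow

variable {p c : ℝ}

theorem antitoneOn_add_rpow_neg (hp : 0 ≤ p) (hc : 0 < c) :
    AntitoneOn (fun t : ℝ ↦ (c + t) ^ (-p)) (Ici 0) := fun s hs t _ hst ↦
  rpow_le_rpow_of_nonpos (add_pos_of_pos_of_nonneg hc hs) (by gcongr) (neg_nonpos.2 hp)

theorem integrableOn_add_rpow_neg (hp : 1 < p) (hc : 0 < c) :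
    IntegrableOn (fun t : ℝ ↦ (c + t) ^ (-p)) (Ioi 0) := by
  simpa only [add_comm c] using integrableOn_add_rpow_Ioi_of_lt (neg_lt_neg hp) (neg_lt_zero.2 hc)

theorem integral_Ioi_add_rpow_neg (hp : 1 < p) (hc : 0 < c) :
    ∫ t in Ioi 0, (c + t) ^ (-p) = c ^ (1 - p) / (p - 1) := by
  have h := (measurePreserving_add_left volume c).setIntegral_preimage_emb
    (measurableEmbedding_addLeft c) (fun y : ℝ ↦ y ^ (-p)) (Ioi c)
  rw [preimage_const_add_Ioi, sub_self] at h
  rw [h, integral_Ioi_rpow_of_lt (neg_lt_neg hp) hc, neg_div, ← div_neg, neg_add_eq_sub, neg_sub]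

theorem add_rpow_neg_nonneg (hc : 0 < c) : ∀ t ∈ Ioi (0 : ℝ), 0 ≤ (c + t) ^ (-p) :=
  fun _ ht ↦ rpow_nonneg (add_pos hc ht).le _

theorem summable_add_abs_rpow_neg (hp : 1 < p) (hc : 0 < c) :
    Summable fun n : ℤ ↦ (c + |(n : ℝ)|) ^ (-p) :=
  summable_int_comp_abs (antitoneOn_add_rpow_neg (by linarith) hc)
    (integrableOn_add_rpow_neg hp hc) (add_rpow_neg_nonneg hc)

theorem tsum_add_abs_rpow_neg_le (hp : 1 < p) (hc : 0 < c) :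
    ∑' n : ℤ, (c + |(n : ℝ)|) ^ (-p) ≤ c ^ (-p) + 2 * (c ^ (1 - p) / (p - 1)) := by
  have h := tsum_int_comp_abs_le (antitoneOn_add_rpow_neg (by linarith) hc)
    (integrableOn_add_rpow_neg hp hc) (add_rpow_neg_nonneg hc)
  rwa [integral_Ioi_add_rpow_neg hp hc, add_zero] at h

end AddRpow

theorem even_secondDiff {G : Type*} [AddCommGroup G] {f : G → ℝ} (hf : f.Even) (h : G) :
    (secondDiff h f).Even := fun x ↦ by
  rw [secondDiff, secondDiff, hf x, ← hf (-x + h), ← hf (-x - h), neg_add, neg_sub', neg_neg,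
    ← sub_eq_add_neg, sub_neg_eq_add]
  ring

theorem abs_secondDiff_le_of_abs_sub_le {G : Type*} [AddCommGroup G] {f : G → ℝ} {h x : G}
    {c B : ℝ} (h₀ : |f x - c| ≤ B) (h_add : |f (x + h) - c| ≤ B) (h_sub : |f (x - h) - c| ≤ B) :
    |secondDiff h f x| ≤ 4 * B := by
  rw [secondDiff]
  rw [abs_le] at *
  constructor <;> linarith

section MeanValue

variable {a h x B : ℝ}

theorem abs_sub_le_of_hasDerivAt {f f' : ℝ → ℝ} (hf : ∀ y, a ≤ y → HasDerivAt f (f' y) y)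
    (hB : ∀ y, a ≤ y → |f' y| ≤ B) (hx : a ≤ x) (hh : 0 ≤ h) : |f (x + h) - f x| ≤ B * h := by
  have h₁ := (convex_Ici a).norm_image_sub_le_of_norm_hasDerivWithin_le
    (fun y hy ↦ (hf y hy).hasDerivWithinAt) hB (mem_Ici.2 hx)
    (mem_Ici.2 (le_add_of_le_of_nonneg hx hh))
  simpa [abs_of_nonneg hh] using h₁

theorem hasDerivAt_secondDiff {f f' : ℝ → ℝ} (hf : ∀ y, a ≤ y → HasDerivAt f (f' y) y)
    (hh : 0 ≤ h) (hx : a + h ≤ x) : HasDerivAt (secondDiff h f) (secondDiff h f' x) x :=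
  (((hf x (by linarith)).const_mul 2).sub ((hf (x + h) (by linarith)).comp_add_const x h)).sub
    ((hf (x - h) (by linarith)).comp_sub_const x h)

theorem abs_secondDiff_le {f f' f'' : ℝ → ℝ} (hf : ∀ y, a ≤ y → HasDerivAt f (f' y) y)
    (hf' : ∀ y, a ≤ y → HasDerivAt f' (f'' y) y) (hB : ∀ y, a ≤ y → |f'' y| ≤ B)
    (hh : 0 ≤ h) (hx : a + h ≤ x) : |secondDiff h f x| ≤ B * h ^ 2 := by
  have hderiv (y : ℝ) (hy : a ≤ y) :
      HasDerivAt (fun z ↦ f (z + h) - f z) (f' (y + h) - f' y) y :=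
    ((hf _ (by linarith)).comp_add_const y h).sub (hf y hy)
  have hbound := abs_sub_le_of_hasDerivAt hderiv
    (fun y hy ↦ abs_sub_le_of_hasDerivAt hf' hB hy hh) (le_sub_right_of_add_le hx) hh
  rw [← abs_neg, sq, ← mul_assoc]
  convert hbound using 2
  rw [secondDiff, sub_add_cancel]
  ring

theorem abs_secondDiff_secondDiff_le {f : ℕ → ℝ → ℝ}
    (hf : ∀ k y, a ≤ y → HasDerivAt (f k) (f (k + 1) y) y) (hB : ∀ y, a ≤ y → |f 4 y| ≤ B)
    (hh : 0 ≤ h) (hx : a + 2 * h ≤ x) : |secondDiff h (secondDiff h (f 0)) x| ≤ B * h ^ 4 := by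
  have h₂ := abs_secondDiff_le (x := x) (a := a + h) (fun y ↦ hasDerivAt_secondDiff (hf 0) hh)
    (fun y ↦ hasDerivAt_secondDiff (hf 1) hh) (fun y ↦ abs_secondDiff_le (hf 2) (hf 3) hB hh)
    hh (by linarith)
  linarith

end MeanValue

/-- The even function `x ↦ e^{-ρ|x|^γ}`, whose values on `ℤ` are the coefficients of `Frho`. -/
def stretchedExp (γ ρ x : ℝ) : ℝ := exp (-ρ * |x| ^ γ)

section Derivatives

open Polynomial

variable {γ ρ x : ℝ}

/-- The polynomials `Pₖ` such that `e^{-ρx^γ}` has `k`-th derivative `x⁻ᵏ Pₖ(ρx^γ) e^{-ρx^γ}` on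
`(0, ∞)`. -/
def derivPoly (γ : ℝ) : ℕ → ℝ[X]
  | 0 => 1
  | k + 1 => C γ * X * (derivative (derivPoly γ k) - derivPoly γ k) - C (k : ℝ) * derivPoly γ k

/-- The `k`-th derivative of `stretchedExp γ ρ` away from the origin, see
`hasDerivAt_stretchedExpDeriv`. -/
def stretchedExpDeriv (γ ρ : ℝ) (k : ℕ) (x : ℝ) : ℝ :=
  (derivPoly γ k).eval (ρ * |x| ^ γ) * stretchedExp γ ρ x / x ^ k

theorem stretchedExpDeriv_zero : stretchedExpDeriv γ ρ 0 = stretchedExp γ ρ := by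
  funext x
  simp [stretchedExpDeriv, derivPoly]

theorem hasDerivAt_mul_abs_rpow (hx : 0 < x) :
    HasDerivAt (fun y ↦ ρ * |y| ^ γ) (γ * (ρ * |x| ^ γ) / x) x := by
  have h := ((hasDerivAt_abs hx.ne').rpow_const (p := γ) (.inl (abs_pos.2 hx.ne').ne')).const_mul ρ
  refine h.congr_deriv ?_
  rw [sign_pos hx, abs_of_pos hx, rpow_sub_one hx.ne', SignType.coe_one]
  ring

theorem hasDerivAt_stretchedExpDeriv (k : ℕ) (hx : 0 < x) :
    HasDerivAt (stretchedExpDeriv γ ρ k) (stretchedExpDeriv γ ρ (k + 1) x) x := by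
  have ht := hasDerivAt_mul_abs_rpow (γ := γ) (ρ := ρ) hx
  have hexp : HasDerivAt (stretchedExp γ ρ) (stretchedExp γ ρ x * (γ * (-ρ * |x| ^ γ) / x)) x :=
    (hasDerivAt_mul_abs_rpow hx).exp
  have h := ((((derivPoly γ k).hasDerivAt _).comp x ht).mul hexp).div (hasDerivAt_pow k x)
    (pow_ne_zero k hx.ne')
  refine h.congr_deriv ?_
  simp only [stretchedExpDeriv, derivPoly, eval_sub, eval_mul, eval_C, eval_X, Function.comp_apply,
    Pi.mul_apply, stretchedExp]
  rcases k with - | k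
  · simp
    ring
  · field_simp
    push_cast
    ring

theorem X_dvd_derivPoly_succ (γ : ℝ) (k : ℕ) : X ∣ derivPoly γ (k + 1) := by
  induction k with
  | zero => exact ⟨-C γ, by simp [derivPoly]⟩
  | succ k ih =>
    rw [derivPoly]
    exact dvd_sub (dvd_mul_of_dvd_left (dvd_mul_left X _) _) (ih.mul_left _)

theorem exists_abs_eval_mul_exp_neg_le (p : ℝ[X]) :
    ∃ K, 0 < K ∧ ∀ t, 0 ≤ t → |p.eval t| * exp (-t) ≤ K := by
  have hcont : Continuous fun t ↦ |p.eval t / exp t| :=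
    (p.continuous.div₀ continuous_exp exp_ne_zero).abs
  obtain ⟨T, hT⟩ := eventually_atTop.1
    (p.tendsto_div_exp_atTop.abs.eventually_lt_const (u := 1) (by norm_num))
  obtain ⟨K, hK⟩ := (isCompact_Icc (a := 0) (b := T)).bddAbove_image hcont.continuousOn
  refine ⟨max K 1, by positivity, fun t ht ↦ ?_⟩
  have hquot : |p.eval t| * exp (-t) = |p.eval t / exp t| := by
    rw [abs_div, abs_exp, exp_neg, div_eq_mul_inv]
  rw [hquot]
  rcases le_total t T with htT | hTt
  · exact le_max_of_le_left (hK ⟨t, ⟨ht, htT⟩, rfl⟩)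
  · exact le_max_of_le_right (hT t hTt).le

theorem exists_abs_stretchedExpDeriv_le (γ : ℝ) (k : ℕ) :
    ∃ K, 0 < K ∧ ∀ ρ x, 0 ≤ ρ → 0 < x →
      |stretchedExpDeriv γ ρ (k + 1) x| ≤ K * ρ * x ^ (γ - (k + 1)) := by
  obtain ⟨q, hq⟩ := X_dvd_derivPoly_succ γ k
  obtain ⟨K, hK, hbound⟩ := exists_abs_eval_mul_exp_neg_le q
  refine ⟨K, hK, fun ρ x hρ hx ↦ ?_⟩
  have ht : 0 ≤ ρ * x ^ γ := by positivity
  calc |stretchedExpDeriv γ ρ (k + 1) x|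
      = |q.eval (ρ * x ^ γ)| * exp (-(ρ * x ^ γ)) * (ρ * (x ^ γ / x ^ (k + 1))) := by
        rw [stretchedExpDeriv, stretchedExp, hq, eval_mul, eval_X, abs_div, abs_mul, abs_mul,
          abs_exp, abs_of_pos hx, abs_of_nonneg ht, abs_of_pos (pow_pos hx _), neg_mul]
        ring
    _ ≤ K * (ρ * (x ^ γ / x ^ (k + 1))) := by gcongr; exact hbound _ ht
    _ = K * ρ * x ^ (γ - (k + 1)) := by
        rw [rpow_sub hx, ← Nat.cast_add_one, rpow_natCast, mul_assoc]

end Derivatives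

section Bounds

variable {γ ρ m x : ℝ}

theorem abs_stretchedExp_sub_one_le (hρ : 0 ≤ ρ) : |stretchedExp γ ρ x - 1| ≤ ρ * |x| ^ γ := by
  have ht : 0 ≤ ρ * |x| ^ γ := by positivity
  have hle : exp (-ρ * |x| ^ γ) ≤ 1 := exp_le_one_iff.2 (by linarith)
  rw [stretchedExp, abs_of_nonpos (by linarith)]
  linarith [add_one_le_exp (-ρ * |x| ^ γ)]

theorem even_stretchedExp : (stretchedExp γ ρ).Even := fun x ↦ by
  rw [stretchedExp, stretchedExp, abs_neg]

theorem abs_secondDiff_secondDiff_stretchedExp_le_of_abs_le (hγ : 0 ≤ γ) (hρ : 0 ≤ ρ) (hm : 0 < m)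
    (hx : |x| ≤ 3 * m) : |secondDiff m (secondDiff m (stretchedExp γ ρ)) x| ≤
      4096 * 2 ^ γ * ρ * m ^ 4 * (m + |x|) ^ (γ - 4) := by
  set S := m + |x| with hS
  have hS₀ : 0 < S := by positivity
  have hone (y : ℝ) (hy : |y| ≤ 2 * S) : |stretchedExp γ ρ y - 1| ≤ ρ * (2 * S) ^ γ :=
    (abs_stretchedExp_sub_one_le hρ).trans (by gcongr)
  have hdiff (y : ℝ) (hy : |y| ≤ S) : |secondDiff m (stretchedExp γ ρ) y - 0| ≤
      4 * (ρ * (2 * S) ^ γ) := by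
    rw [sub_zero]
    apply abs_secondDiff_le_of_abs_sub_le <;> apply hone <;>
      (rw [abs_le] at *; constructor <;> linarith [abs_nonneg x])
  have hdiff₂ : |secondDiff m (secondDiff m (stretchedExp γ ρ)) x| ≤
      4 * (4 * (ρ * (2 * S) ^ γ)) := by
    apply abs_secondDiff_le_of_abs_sub_le <;> apply hdiff <;>
      (rw [abs_le]; constructor <;> linarith [le_abs_self x, neg_abs_le x])
  calc |secondDiff m (secondDiff m (stretchedExp γ ρ)) x|
      ≤ 16 * 2 ^ γ * ρ * (S ^ 4 * S ^ (γ - 4)) := by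
        rw [← rpow_natCast S 4, ← rpow_add hS₀, Nat.cast_ofNat, add_sub_cancel]
        rw [mul_rpow zero_le_two hS₀.le] at hdiff₂
        linarith
    _ ≤ 16 * 2 ^ γ * ρ * ((4 * m) ^ 4 * S ^ (γ - 4)) := by gcongr; linarith
    _ = 4096 * 2 ^ γ * ρ * m ^ 4 * S ^ (γ - 4) := by ring

theorem exists_abs_secondDiff_secondDiff_stretchedExp_le_of_le (hγ : γ ≤ 4) :
    ∃ K, 0 < K ∧ ∀ ρ m x, 0 ≤ ρ → 0 < m → 3 * m ≤ x →
      |secondDiff m (secondDiff m (stretchedExp γ ρ)) x| ≤ K * ρ * m ^ 4 * (m + x) ^ (γ - 4) := by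
  obtain ⟨K, hK, hbound⟩ := exists_abs_stretchedExpDeriv_le γ 3
  norm_num only [Nat.cast_ofNat] at hbound
  refine ⟨K * 4⁻¹ ^ (γ - 4), by positivity, fun ρ m x hρ hm hx ↦ ?_⟩
  have hS : 0 < 4⁻¹ * (m + x) := by linarith
  have hderiv (y : ℝ) (hy : 4⁻¹ * (m + x) ≤ y) :
      |stretchedExpDeriv γ ρ 4 y| ≤ K * ρ * (4⁻¹ * (m + x)) ^ (γ - 4) :=
    (hbound ρ y hρ (hS.trans_le hy)).trans (by
      exact mul_le_mul_of_nonneg_left (rpow_le_rpow_of_nonpos hS hy (by linarith)) (by positivity))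
  have h := abs_secondDiff_secondDiff_le (f := stretchedExpDeriv γ ρ) (x := x)
    (fun k y hy ↦ hasDerivAt_stretchedExpDeriv k (hS.trans_le hy)) hderiv hm.le (by linarith)
  rw [stretchedExpDeriv_zero, mul_rpow (by norm_num) (by linarith)] at h
  linarith

theorem exists_abs_secondDiff_secondDiff_stretchedExp_le (hγ₀ : 0 ≤ γ) (hγ₄ : γ ≤ 4) :
    ∃ K, 0 < K ∧ ∀ ρ m x, 0 ≤ ρ → 0 < m →
      |secondDiff m (secondDiff m (stretchedExp γ ρ)) x| ≤ K * ρ * m ^ 4 * (m + |x|) ^ (γ - 4) := by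
  obtain ⟨K, hK, hfar⟩ := exists_abs_secondDiff_secondDiff_stretchedExp_le_of_le hγ₄
  refine ⟨max K (4096 * 2 ^ γ), by positivity, fun ρ m x hρ hm ↦ ?_⟩
  have heven := even_secondDiff (even_secondDiff (even_stretchedExp (γ := γ) (ρ := ρ)) m) m
  have habs : secondDiff m (secondDiff m (stretchedExp γ ρ)) x =
      secondDiff m (secondDiff m (stretchedExp γ ρ)) |x| := by
    rcases abs_choice x with h | h <;> rw [h]
    exact (heven x).symm
  rcases le_total (3 * m) |x| with hx | hx
  · rw [habs]
    exact (hfar ρ m |x| hρ hm hx).trans (by gcongr; exact le_max_left _ _)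
  · exact (abs_secondDiff_secondDiff_stretchedExp_le_of_abs_le hγ₀ hρ hm hx).trans
      (by gcongr; exact le_max_right _ _)

end Bounds

section Pointwise

variable {γ ρ : ℝ}

theorem Frho_eq_cosSeries : Frho γ ρ = cosSeries fun n : ℤ ↦ stretchedExp γ ρ n := rfl

theorem antitoneOn_exp_neg_mul_rpow (hγ : 0 ≤ γ) (hρ : 0 ≤ ρ) :
    AntitoneOn (fun t : ℝ ↦ exp (-ρ * t ^ γ)) (Ici 0) := fun s (hs : 0 ≤ s) t _ hst ↦ by
  simp only [neg_mul]
  gcongr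

theorem integrableOn_exp_neg_mul_rpow (hγ : 0 < γ) (hρ : 0 < ρ) :
    IntegrableOn (fun t : ℝ ↦ exp (-ρ * t ^ γ)) (Ioi 0) := by
  simpa only [rpow_zero, one_mul] using
    integrableOn_rpow_mul_exp_neg_mul_rpow neg_one_lt_zero hγ hρ

theorem summable_stretchedExp (hγ : 0 < γ) (hρ : 0 < ρ) :
    Summable fun n : ℤ ↦ stretchedExp γ ρ n :=
  summable_int_comp_abs (antitoneOn_exp_neg_mul_rpow hγ.le hρ.le)
    (integrableOn_exp_neg_mul_rpow hγ hρ) fun _ _ ↦ (exp_pos _).le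

theorem continuous_Frho (hγ : 0 < γ) (hρ : 0 < ρ) : Continuous (Frho γ ρ) :=
  continuous_cosSeries (summable_stretchedExp hγ hρ)

theorem abs_Frho_le (hγ : 0 < γ) (hρ : 0 < ρ) (ξ : ℝ) :
    |Frho γ ρ ξ| ≤ 1 + 2 * (ρ ^ (-1 / γ) * Gamma (1 / γ + 1)) := by
  have hsum := tsum_int_comp_abs_le (antitoneOn_exp_neg_mul_rpow hγ.le hρ.le)
    (integrableOn_exp_neg_mul_rpow hγ hρ) fun _ _ ↦ (exp_pos _).le
  rw [integral_exp_neg_mul_rpow hγ hρ, zero_rpow hγ.ne', mul_zero, exp_zero] at hsum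
  exact (abs_cosSeries_le (summable_stretchedExp hγ hρ) (fun n ↦ (abs_exp _).le) ξ).trans hsum

theorem exists_abs_Frho_rpow_le_div (hγ : 0 < γ) :
    ∃ K, 0 < K ∧ ∀ h, 0 < h → h ≤ 1 → ∀ ξ, |Frho γ (h ^ γ) ξ| ≤ K / h := by
  have : 0 < Gamma (1 / γ + 1) := Gamma_pos_of_pos (by positivity)
  refine ⟨1 + 2 * Gamma (1 / γ + 1), by positivity, fun h hh hh₁ ξ ↦ ?_⟩
  have hpow : (h ^ γ) ^ (-1 / γ) = h⁻¹ := by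
    rw [← rpow_mul hh.le, mul_div_cancel₀ _ hγ.ne', rpow_neg_one]
  calc |Frho γ (h ^ γ) ξ|
      ≤ 1 + 2 * (h⁻¹ * Gamma (1 / γ + 1)) := hpow ▸ abs_Frho_le hγ (rpow_pos_of_pos hh γ) ξ
    _ ≤ h⁻¹ + 2 * (h⁻¹ * Gamma (1 / γ + 1)) := by gcongr; exact (one_le_inv₀ hh).2 hh₁
    _ = (1 + 2 * Gamma (1 / γ + 1)) / h := by ring

theorem secondDiff_comp_intCast (f : ℝ → ℝ) (m : ℤ) :
    secondDiff m (fun n : ℤ ↦ f n) = fun n : ℤ ↦ secondDiff (m : ℝ) f n := by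
  funext n
  simp only [secondDiff, Int.cast_add, Int.cast_sub]

theorem sq_mul_Frho_eq (hγ : 0 < γ) (hρ : 0 < ρ) (m : ℤ) (ξ : ℝ) :
    (2 - 2 * cos (m * ξ)) ^ 2 * Frho γ ρ ξ =
      cosSeries (fun n : ℤ ↦ secondDiff (m : ℝ) (secondDiff (m : ℝ) (stretchedExp γ ρ)) n) ξ := by
  have ha := summable_stretchedExp hγ hρ
  rw [← secondDiff_comp_intCast, ← secondDiff_comp_intCast,
    cosSeries_secondDiff (summable_secondDiff ha m), cosSeries_secondDiff ha, Frho_eq_cosSeries, sq,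
    mul_assoc]

theorem exists_sq_mul_abs_Frho_le (hγ₀ : 0 < γ) (hγ₃ : γ < 3) :
    ∃ K, 0 < K ∧ ∀ ρ ξ : ℝ, ∀ m : ℕ, 0 < ρ → 1 ≤ m →
      (2 - 2 * cos (m * ξ)) ^ 2 * |Frho γ ρ ξ| ≤ K * ρ * (m : ℝ) ^ (1 + γ) := by
  obtain ⟨K, hK, hdiff⟩ := exists_abs_secondDiff_secondDiff_stretchedExp_le hγ₀.le
    (by linarith : γ ≤ 4)
  have hγ' : 0 < 4 - γ - 1 := by linarith
  refine ⟨K * (1 + 2 / (4 - γ - 1)), by positivity, fun ρ ξ m hρ hm ↦ ?_⟩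
  have hm₁ : (1 : ℝ) ≤ m := mod_cast hm
  have hm₀ : (0 : ℝ) < m := by linarith
  have hsummable := summable_add_abs_rpow_neg (p := 4 - γ) (by linarith) hm₀
  have hpow₀ : (m : ℝ) ^ 4 * (m : ℝ) ^ (-(4 - γ)) ≤ (m : ℝ) ^ (1 + γ) := by
    rw [← rpow_natCast, ← rpow_add hm₀]
    exact rpow_le_rpow_of_exponent_le hm₁ (by norm_num)
  have hpow₁ : (m : ℝ) ^ 4 * (m : ℝ) ^ (1 - (4 - γ)) = (m : ℝ) ^ (1 + γ) := by
    rw [← rpow_natCast, ← rpow_add hm₀]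
    norm_num
    ring_nf
  calc (2 - 2 * cos (m * ξ)) ^ 2 * |Frho γ ρ ξ|
      = |(2 - 2 * cos ((m : ℤ) * ξ)) ^ 2 * Frho γ ρ ξ| := by
        rw [abs_mul, abs_sq, Int.cast_natCast]
    _ ≤ ∑' n : ℤ, K * ρ * m ^ 4 * (m + |(n : ℝ)|) ^ (-(4 - γ)) := by
        rw [sq_mul_Frho_eq hγ₀ hρ]
        refine abs_cosSeries_le (hsummable.mul_left _) (fun n ↦ ?_) ξ
        simpa only [neg_sub, Int.cast_natCast] using hdiff ρ m n hρ.le hm₀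
    _ ≤ K * ρ * m ^ 4 * (m ^ (-(4 - γ)) + 2 * (m ^ (1 - (4 - γ)) / (4 - γ - 1))) := by
        rw [tsum_mul_left]
        gcongr
        exact tsum_add_abs_rpow_neg_le (by linarith) hm₀
    _ = K * ρ * (m ^ 4 * m ^ (-(4 - γ)) + m ^ 4 * m ^ (1 - (4 - γ)) * (2 / (4 - γ - 1))) := by ring
    _ ≤ K * ρ * (m ^ (1 + γ) + m ^ (1 + γ) * (2 / (4 - γ - 1))) := by rw [hpow₁]; gcongr
    _ = K * (1 + 2 / (4 - γ - 1)) * ρ * m ^ (1 + γ) := by ring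

theorem exists_abs_Frho_le_mul_rpow (hγ₀ : 0 < γ) (hγ₃ : γ < 3) :
    ∃ K, 0 < K ∧ ∀ ρ ξ, 0 < ρ → 0 < ξ → ξ ≤ π → |Frho γ ρ ξ| ≤ K * ρ * ξ ^ (-1 - γ) := by
  obtain ⟨K, hK, hbound⟩ := exists_sq_mul_abs_Frho_le hγ₀ hγ₃
  refine ⟨K * π ^ (1 + γ), by positivity, fun ρ ξ hρ hξ hξπ ↦ ?_⟩
  set m := ⌊π / ξ⌋₊
  have hm : 1 ≤ m := Nat.le_floor (by rwa [Nat.cast_one, one_le_div hξ])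
  have hm_le : (m : ℝ) ≤ π / ξ := Nat.floor_le (by positivity)
  have hcos : cos (m * ξ) ≤ 0 := by
    have hm₁ : (1 : ℝ) ≤ m := mod_cast hm
    have hlt : π < (m + 1) * ξ := (div_lt_iff₀ hξ).1 (Nat.lt_floor_add_one _)
    have hle : m * ξ ≤ π := (le_div_iff₀ hξ).1 hm_le
    exact cos_nonpos_of_pi_div_two_le_of_le (by nlinarith) (by linarith [pi_pos])
  calc |Frho γ ρ ξ|
      ≤ (2 - 2 * cos (m * ξ)) ^ 2 * |Frho γ ρ ξ| :=
        le_mul_of_one_le_left (abs_nonneg _) (by nlinarith)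
    _ ≤ K * ρ * m ^ (1 + γ) := hbound ρ ξ m hρ hm
    _ ≤ K * ρ * (π / ξ) ^ (1 + γ) := by gcongr
    _ = K * π ^ (1 + γ) * ρ * ξ ^ (-1 - γ) := by
        rw [div_rpow pi_pos.le hξ.le, ← neg_add', rpow_neg hξ.le]
        ring

end Pointwise

section ZeroMode

variable {γ ρ A r R : ℝ} {f : ℝ → ℝ}

theorem integral_rpow_neg_one_sub_le {p : ℝ} (hp : 0 < p) (hr : 0 < r) (hrR : r ≤ R) :
    ∫ x in r..R, x ^ (-1 - p) ≤ r ^ (-p) / p := by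
  have hexp : -1 - p + 1 = -p := by ring
  rw [integral_rpow (.inr ⟨by linarith, notMem_uIcc_of_lt hr (hr.trans_le hrR)⟩), hexp,
    div_neg, ← neg_div, neg_sub]
  gcongr
  exact sub_le_self _ (rpow_nonneg (hr.trans_le hrR).le _)

theorem two_sub_two_mul_cos_nonneg (x : ℝ) : 0 ≤ 2 - 2 * cos x := by linarith [cos_le_one x]

theorem two_sub_two_mul_cos_le_sq (x : ℝ) : 2 - 2 * cos x ≤ x ^ 2 := by
  linarith [one_sub_sq_div_two_le_cos (x := x)]

theorem integral_zero_two_sub_cos_mul_abs_le (hγ : γ < 2) (hf : Continuous f) (hr : 0 ≤ r)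
    (hfA : ∀ ξ, 0 < ξ → ξ ≤ r → |f ξ| ≤ A * ξ ^ (-1 - γ)) (m : ℝ) :
    ∫ ξ in 0..r, (2 - 2 * cos (m * ξ)) * |f ξ| ≤ A * m ^ 2 * (r ^ (2 - γ) / (2 - γ)) := by
  have hexp : -1 < 1 - γ := by linarith
  have hint : IntervalIntegrable (fun ξ ↦ A * m ^ 2 * ξ ^ (1 - γ)) volume 0 r :=
    (intervalIntegral.intervalIntegrable_rpow' hexp).const_mul _
  have hle (ξ : ℝ) (hξ : ξ ∈ Ioo 0 r) :
      (2 - 2 * cos (m * ξ)) * |f ξ| ≤ A * m ^ 2 * ξ ^ (1 - γ) := by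
    calc (2 - 2 * cos (m * ξ)) * |f ξ|
        ≤ (m * ξ) ^ 2 * (A * ξ ^ (-1 - γ)) :=
          mul_le_mul (two_sub_two_mul_cos_le_sq _) (hfA ξ hξ.1 hξ.2.le) (abs_nonneg _) (sq_nonneg _)
      _ = A * m ^ 2 * (ξ ^ (2 : ℝ) * ξ ^ (-1 - γ)) := by rw [rpow_two]; ring
      _ = A * m ^ 2 * ξ ^ (1 - γ) := by rw [← rpow_add hξ.1]; ring_nf
  calc ∫ ξ in 0..r, (2 - 2 * cos (m * ξ)) * |f ξ|
      ≤ ∫ ξ in 0..r, A * m ^ 2 * ξ ^ (1 - γ) :=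
        intervalIntegral.integral_mono_on_of_le_Ioo hr
          (Continuous.intervalIntegrable (by fun_prop) _ _) hint hle
    _ = A * m ^ 2 * (r ^ (2 - γ) / (2 - γ)) := by
        have h2 : 1 - γ + 1 = 2 - γ := by ring
        rw [intervalIntegral.integral_const_mul, integral_rpow (.inl hexp), h2,
          zero_rpow (by linarith), sub_zero]

theorem integral_two_sub_cos_mul_abs_le (hγ : 0 < γ) (hf : Continuous f) (hA : 0 ≤ A)
    (hr : 0 < r) (hrR : r ≤ R) (hfA : ∀ ξ, 0 < ξ → ξ ≤ R → |f ξ| ≤ A * ξ ^ (-1 - γ)) (m : ℝ) :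
    ∫ ξ in r..R, (2 - 2 * cos (m * ξ)) * |f ξ| ≤ 4 * A * (r ^ (-γ) / γ) := by
  have hint : IntervalIntegrable (fun ξ ↦ 4 * A * ξ ^ (-1 - γ)) volume r R :=
    (intervalIntegral.intervalIntegrable_rpow
      (.inr (notMem_uIcc_of_lt hr (hr.trans_le hrR)))).const_mul _
  have hle (ξ : ℝ) (hξ : ξ ∈ Icc r R) :
      (2 - 2 * cos (m * ξ)) * |f ξ| ≤ 4 * A * ξ ^ (-1 - γ) := by
    rw [mul_assoc]
    exact mul_le_mul (by linarith [neg_one_le_cos (m * ξ)]) (hfA ξ (hr.trans_le hξ.1) hξ.2)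
      (abs_nonneg _) (by norm_num)
  calc ∫ ξ in r..R, (2 - 2 * cos (m * ξ)) * |f ξ|
      ≤ ∫ ξ in r..R, 4 * A * ξ ^ (-1 - γ) :=
        intervalIntegral.integral_mono_on hrR (Continuous.intervalIntegrable (by fun_prop) _ _)
          hint hle
    _ ≤ 4 * A * (r ^ (-γ) / γ) := by
        rw [intervalIntegral.integral_const_mul]
        gcongr
        exact integral_rpow_neg_one_sub_le hγ hr hrR

theorem integral_two_sub_cos_mul_Frho (hγ : 0 < γ) (hρ : 0 < ρ) (m : ℕ) :
    ∫ ξ in 0..π, (2 - 2 * cos (m * ξ)) * Frho γ ρ ξ =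
      2 * π * (1 - exp (-(ρ * (m : ℝ) ^ γ))) := by
  have ha := summable_stretchedExp hγ hρ
  have hint := integral_cosSeries (summable_secondDiff ha m)
  simp only [cosSeries_secondDiff ha, ← Frho_eq_cosSeries, Int.cast_natCast] at hint
  rw [hint, secondDiff_comp_intCast]
  simp only [secondDiff, stretchedExp, Int.cast_natCast, Int.cast_zero, zero_add, zero_sub, abs_neg,
    abs_zero, Nat.abs_cast, zero_rpow hγ.ne', mul_zero, exp_zero, neg_mul]
  ring

theorem div_two_le_one_sub_exp_neg {y : ℝ} (hy₀ : 0 ≤ y) (hy₁ : y ≤ 1) :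
    y / 2 ≤ 1 - exp (-y) := by
  have hexp : exp (-y) ≤ (1 + y)⁻¹ := by
    rw [exp_neg]
    gcongr
    linarith [add_one_le_exp y]
  have hinv : y / 2 ≤ 1 - (1 + y)⁻¹ := by
    rw [le_sub_iff_add_le, ← le_sub_iff_add_le', inv_le_iff_one_le_mul₀ (by linarith)]
    nlinarith
  linarith

theorem pi_mul_le_integral_two_sub_cos_mul_abs_Frho {m : ℕ} (hγ : 0 < γ) (hρ : 0 < ρ)
    (hρm : ρ * (m : ℝ) ^ γ ≤ 1) :
    π * (ρ * (m : ℝ) ^ γ) ≤ ∫ ξ in 0..π, (2 - 2 * cos (m * ξ)) * |Frho γ ρ ξ| := by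
  have hF := continuous_Frho hγ hρ
  calc π * (ρ * (m : ℝ) ^ γ)
      = 2 * π * (ρ * (m : ℝ) ^ γ / 2) := by ring
    _ ≤ 2 * π * (1 - exp (-(ρ * (m : ℝ) ^ γ))) := by
        gcongr
        exact div_two_le_one_sub_exp_neg (by positivity) hρm
    _ = ∫ ξ in 0..π, (2 - 2 * cos (m * ξ)) * Frho γ ρ ξ :=
        (integral_two_sub_cos_mul_Frho hγ hρ m).symm
    _ ≤ ∫ ξ in 0..π, (2 - 2 * cos (m * ξ)) * |Frho γ ρ ξ| :=
        intervalIntegral.integral_mono_on pi_pos.le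
          (Continuous.intervalIntegrable (by fun_prop) _ _)
          (Continuous.intervalIntegrable (by fun_prop) _ _) fun ξ _ ↦
          mul_le_mul_of_nonneg_left (le_abs_self _) (two_sub_two_mul_cos_nonneg _)

end ZeroMode

section Annulus

variable {γ ρ : ℝ}

theorem sub_le_integral_two_sub_cos_mul_abs_Frho {K δ : ℝ} {M m : ℕ} (hγ₀ : 0 < γ) (hγ₂ : γ < 2)
    (hK : 0 < K) (hbound : ∀ ξ, 0 < ξ → ξ ≤ π → |Frho γ ρ ξ| ≤ K * ρ * ξ ^ (-1 - γ))
    (hρ : 0 < ρ) (hδ₀ : 0 < δ) (hδ₁ : δ ≤ 1) (hM : 1 ≤ M) (hMm : M ≤ m)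
    (hρm : ρ * (m : ℝ) ^ γ ≤ 1) :
    (π - K * (δ ^ (2 - γ) / (2 - γ)) - 4 * K * ((δ * M) ^ (-γ) / γ)) * (ρ * (m : ℝ) ^ γ) ≤
      ∫ ξ in (δ / m)..(δ * M / m), (2 - 2 * cos (m * ξ)) * |Frho γ ρ ξ| := by
  have hm : (0 : ℝ) < m := mod_cast hM.trans hMm
  have hM₁ : (1 : ℝ) ≤ M := mod_cast hM
  have hr₀ : 0 < δ / m := by positivity
  have hr₁ : δ / m ≤ δ * M / m := by gcongr; exact le_mul_of_one_le_right hδ₀.le hM₁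
  have hr₂ : δ * M / m ≤ π := by
    have hMm' : (M : ℝ) ≤ m := mod_cast hMm
    rw [div_le_iff₀ hm]
    nlinarith [pi_gt_three]
  have hF := continuous_Frho hγ₀ hρ
  have hint (a b : ℝ) :
      IntervalIntegrable (fun ξ ↦ (2 - 2 * cos (m * ξ)) * |Frho γ ρ ξ|) volume a b :=
    Continuous.intervalIntegrable (by fun_prop) _ _
  have htotal := pi_mul_le_integral_two_sub_cos_mul_abs_Frho hγ₀ hρ hρm
  have hsplit := intervalIntegral.integral_add_adjacent_intervals
    (hint 0 (δ / m)) (hint (δ / m) (δ * M / m))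
  have hsplit' := intervalIntegral.integral_add_adjacent_intervals
    (hint 0 (δ * M / m)) (hint (δ * M / m) π)
  have hinner : ∫ ξ in 0..(δ / m), (2 - 2 * cos (m * ξ)) * |Frho γ ρ ξ| ≤
      K * (δ ^ (2 - γ) / (2 - γ)) * (ρ * (m : ℝ) ^ γ) := by
    refine (integral_zero_two_sub_cos_mul_abs_le hγ₂ hF hr₀.le
      (fun ξ h₀ h₁ ↦ hbound ξ h₀ (h₁.trans (hr₁.trans hr₂))) m).trans_eq ?_
    rw [div_rpow hδ₀.le hm.le, rpow_sub hm, rpow_two]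
    field_simp
  have houter : ∫ ξ in (δ * M / m)..π, (2 - 2 * cos (m * ξ)) * |Frho γ ρ ξ| ≤
      4 * K * ((δ * M) ^ (-γ) / γ) * (ρ * (m : ℝ) ^ γ) := by
    refine (integral_two_sub_cos_mul_abs_le hγ₀ hF (by positivity) (hr₀.trans_le hr₁) hr₂ hbound
      m).trans_eq ?_
    rw [div_rpow (by positivity) hm.le, rpow_neg hm.le]
    field_simp
  linarith

theorem exists_le_integral_abs_Frho (hγ₀ : 0 < γ) (hγ₂ : γ < 2) :
    ∃ δ : ℝ, ∃ M : ℕ, 0 < δ ∧ δ ≤ 1 ∧ 2 ≤ M ∧ ∀ ρ : ℝ, ∀ m : ℕ, 0 < ρ → M ≤ m →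
      ρ * (m : ℝ) ^ γ ≤ 1 → ρ * (m : ℝ) ^ γ ≤ 4 * ∫ ξ in (δ / m)..(δ * M / m), |Frho γ ρ ξ| := by
  obtain ⟨K, hK, hbound⟩ := exists_abs_Frho_le_mul_rpow hγ₀ (by linarith : γ < 3)
  have hδ_tendsto : Tendsto (fun δ : ℝ ↦ K * (δ ^ (2 - γ) / (2 - γ))) (𝓝[>] 0) (𝓝 0) := by
    have hcont : Continuous fun δ : ℝ ↦ K * (δ ^ (2 - γ) / (2 - γ)) :=
      ((continuous_rpow_const (by linarith)).div_const _).const_mul K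
    exact (hcont.tendsto' 0 0 (by rw [zero_rpow (by linarith), zero_div, mul_zero])).mono_left
      nhdsWithin_le_nhds
  obtain ⟨δ, hδK, hδ₀, hδ₁⟩ := ((hδ_tendsto.eventually_lt_const one_pos).and
    (Ioc_mem_nhdsGT one_pos)).exists
  have hM_tendsto : Tendsto (fun M : ℕ ↦ 4 * K * ((δ * M) ^ (-γ) / γ)) atTop (𝓝 0) := by
    have hpow := (tendsto_rpow_neg_atTop hγ₀).comp
      (tendsto_natCast_atTop_atTop.const_mul_atTop hδ₀)
    simpa using (hpow.div_const γ).const_mul (4 * K)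
  obtain ⟨M, hMK, hM⟩ := ((hM_tendsto.eventually_lt_const one_pos).and
    (eventually_ge_atTop 2)).exists
  refine ⟨δ, M, hδ₀, hδ₁, hM, fun ρ m hρ hMm hρm ↦ ?_⟩
  have hF := continuous_Frho hγ₀ hρ
  have hm₀ : (0 : ℝ) < m := mod_cast (by omega : 0 < m)
  have hM₁ : (1 : ℝ) ≤ M := mod_cast (by omega : 1 ≤ M)
  have hr : δ / m ≤ δ * M / m := by gcongr; exact le_mul_of_one_le_right hδ₀.le hM₁
  calc ρ * (m : ℝ) ^ γ
      ≤ (π - K * (δ ^ (2 - γ) / (2 - γ)) - 4 * K * ((δ * M) ^ (-γ) / γ)) * (ρ * (m : ℝ) ^ γ) :=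
        le_mul_of_one_le_left (by positivity) (by linarith [pi_gt_three])
    _ ≤ ∫ ξ in (δ / m)..(δ * M / m), (2 - 2 * cos (m * ξ)) * |Frho γ ρ ξ| :=
        sub_le_integral_two_sub_cos_mul_abs_Frho hγ₀ hγ₂ hK (fun ξ ↦ hbound ρ ξ hρ) hρ hδ₀ hδ₁
          (by omega) hMm hρm
    _ ≤ ∫ ξ in (δ / m)..(δ * M / m), 4 * |Frho γ ρ ξ| :=
        intervalIntegral.integral_mono_on hr (Continuous.intervalIntegrable (by fun_prop) _ _)
          (Continuous.intervalIntegrable (by fun_prop) _ _) fun ξ _ ↦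
          mul_le_mul_of_nonneg_right (by linarith [neg_one_le_cos (m * ξ)]) (abs_nonneg _)
    _ = 4 * ∫ ξ in (δ / m)..(δ * M / m), |Frho γ ρ ξ| := intervalIntegral.integral_const_mul _ _

end Annulus

section WeightedLowerBound

variable {β γ a b : ℝ}

theorem sq_intervalIntegral_le {f : ℝ → ℝ} (hf : Continuous f) (hab : a ≤ b) :
    (∫ x in a..b, f x) ^ 2 ≤ (b - a) * ∫ x in a..b, f x ^ 2 := by
  rcases hab.eq_or_lt with rfl | hab
  · simp
  set I := ∫ x in a..b, f x
  have hnonneg : 0 ≤ ∫ x in a..b, ((b - a) * f x - I) ^ 2 :=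
    intervalIntegral.integral_nonneg hab.le fun _ _ ↦ sq_nonneg _
  have hexpand : ∫ x in a..b, ((b - a) * f x - I) ^ 2 =
      (b - a) * ((b - a) * (∫ x in a..b, f x ^ 2) - I ^ 2) := by
    calc ∫ x in a..b, ((b - a) * f x - I) ^ 2
        = ∫ x in a..b, ((b - a) ^ 2 * f x ^ 2 - 2 * (b - a) * I * f x + I ^ 2) := by
          congr with x
          ring
      _ = (b - a) ^ 2 * (∫ x in a..b, f x ^ 2) - 2 * (b - a) * I * I + (b - a) * I ^ 2 := by
          have hint {g : ℝ → ℝ} (hg : Continuous g) : IntervalIntegrable g volume a b :=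
            hg.intervalIntegrable a b
          rw [intervalIntegral.integral_add (hint (by fun_prop)) (hint (by fun_prop)),
            intervalIntegral.integral_sub (hint (by fun_prop)) (hint (by fun_prop)),
            intervalIntegral.integral_const_mul, intervalIntegral.integral_const_mul,
            intervalIntegral.integral_const, smul_eq_mul]
      _ = (b - a) * ((b - a) * (∫ x in a..b, f x ^ 2) - I ^ 2) := by ring
  rw [hexpand] at hnonneg
  linarith [nonneg_of_mul_nonneg_right hnonneg (sub_pos.2 hab)]

theorem min_rpow_le_rpow {x : ℝ} (ha : 0 < a) (hax : a ≤ x) (hxb : x ≤ b) (β : ℝ) :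
    min (a ^ β) (b ^ β) ≤ x ^ β := by
  rcases le_total 0 β with hβ | hβ
  · exact min_le_of_left_le (rpow_le_rpow ha.le hax hβ)
  · exact min_le_of_right_le (rpow_le_rpow_of_nonpos (ha.trans_le hax) hxb hβ)

theorem min_rpow_mul_sq_integral_le {f : ℝ → ℝ} (hf : Continuous f) (ha : 0 < a) (hab : a ≤ b)
    (β : ℝ) : min (a ^ β) (b ^ β) * (∫ x in a..b, f x) ^ 2 ≤
      (b - a) * ∫ x in a..b, x ^ β * f x ^ 2 := by
  have hint : IntervalIntegrable (fun x ↦ x ^ β * f x ^ 2) volume a b :=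
    (intervalIntegral.intervalIntegrable_rpow
      (.inr (notMem_uIcc_of_lt ha (ha.trans_le hab)))).mul_continuousOn (by fun_prop)
  have hba : 0 ≤ b - a := sub_nonneg.2 hab
  have hmin : 0 ≤ min (a ^ β) (b ^ β) :=
    le_min (rpow_nonneg ha.le _) (rpow_nonneg (ha.trans_le hab).le _)
  calc min (a ^ β) (b ^ β) * (∫ x in a..b, f x) ^ 2
      ≤ min (a ^ β) (b ^ β) * ((b - a) * ∫ x in a..b, f x ^ 2) := by
        gcongr
        exact sq_intervalIntegral_le hf hab
    _ = (b - a) * ∫ x in a..b, min (a ^ β) (b ^ β) * f x ^ 2 := by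
        rw [intervalIntegral.integral_const_mul]
        ring
    _ ≤ (b - a) * ∫ x in a..b, x ^ β * f x ^ 2 := by
        refine mul_le_mul_of_nonneg_left (intervalIntegral.integral_mono_on hab
          (Continuous.intervalIntegrable (by fun_prop) _ _) hint fun x hx ↦ ?_) hba
        exact mul_le_mul_of_nonneg_right (min_rpow_le_rpow ha hx.1 hx.2 β) (sq_nonneg _)

theorem exists_le_integral_annulus (hγ₀ : 0 < γ) (hγ₂ : γ < 2) (β : ℝ) :
    ∃ c δ : ℝ, ∃ M : ℕ, 0 < c ∧ 0 < δ ∧ δ ≤ 1 ∧ 2 ≤ M ∧ ∀ ρ : ℝ, ∀ m : ℕ, 0 < ρ → M ≤ m →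
      ρ * (m : ℝ) ^ γ ≤ 1 → c * ρ ^ 2 * (m : ℝ) ^ (1 + 2 * γ - β) ≤
        ∫ ξ in (δ / m)..(δ * M / m), ξ ^ β * Frho γ ρ ξ ^ 2 := by
  obtain ⟨δ, M, hδ₀, hδ₁, hM, hmass⟩ := exists_le_integral_abs_Frho hγ₀ hγ₂
  have hM₁ : (1 : ℝ) < M := mod_cast (by omega : 1 < M)
  set w := min (δ ^ β) ((δ * M) ^ β)
  have hw : 0 < w := by positivity
  have hlength : 0 < δ * M - δ := by nlinarith
  refine ⟨w / (16 * (δ * M - δ)), δ, M, by positivity, hδ₀, hδ₁, hM, fun ρ m hρ hMm hρm ↦ ?_⟩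
  have hm : (0 : ℝ) < m := mod_cast (by omega : 0 < m)
  have hr : δ / m ≤ δ * M / m := by gcongr; linarith
  have hcs := min_rpow_mul_sq_integral_le (continuous_Frho hγ₀ hρ).abs (by positivity) hr β
  simp only [sq_abs] at hcs
  rw [div_rpow hδ₀.le hm.le, div_rpow (by positivity) hm.le, min_div_div_right (by positivity),
    ← sub_div] at hcs
  calc w / (16 * (δ * M - δ)) * ρ ^ 2 * (m : ℝ) ^ (1 + 2 * γ - β)
      = w / (m : ℝ) ^ β * (ρ * (m : ℝ) ^ γ / 4) ^ 2 / ((δ * M - δ) / m) := by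
        rw [rpow_sub hm, rpow_add hm, rpow_one, mul_comm 2 γ, rpow_mul hm.le, rpow_two]
        field_simp
        norm_num
    _ ≤ w / (m : ℝ) ^ β * (∫ ξ in (δ / m)..(δ * M / m), |Frho γ ρ ξ|) ^ 2 /
          ((δ * M - δ) / m) := by
        gcongr
        linarith [hmass ρ m hρ hMm hρm]
    _ ≤ ∫ ξ in (δ / m)..(δ * M / m), ξ ^ β * Frho γ ρ ξ ^ 2 :=
        (div_le_iff₀' (by positivity)).2 hcs

theorem intervalIntegrable_rpow_mul_sq {f : ℝ → ℝ} (hβ : -1 < β) (hf : Continuous f) (a b : ℝ) :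
    IntervalIntegrable (fun ξ ↦ ξ ^ β * f ξ ^ 2) volume a b :=
  (intervalIntegral.intervalIntegrable_rpow' hβ).mul_continuousOn (by fun_prop)

theorem exists_sum_le_integral (hγ₀ : 0 < γ) (hγ₂ : γ < 2) (hβ : -1 < β) :
    ∃ c : ℝ, ∃ M : ℕ, 0 < c ∧ 2 ≤ M ∧ ∀ ρ : ℝ, ∀ J : ℕ, 0 < ρ → ρ * ((M : ℝ) ^ J) ^ γ ≤ 1 →
      c * ρ ^ 2 * ∑ j ∈ Finset.range J, ((M : ℝ) ^ (j + 1)) ^ (1 + 2 * γ - β) ≤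
        ∫ ξ in 0..π, ξ ^ β * Frho γ ρ ξ ^ 2 := by
  obtain ⟨c, δ, M, hc, hδ₀, hδ₁, hM, hannulus⟩ := exists_le_integral_annulus hγ₀ hγ₂ β
  refine ⟨c, M, hc, hM, fun ρ J hρ hJ ↦ ?_⟩
  have hM₁ : (1 : ℝ) ≤ M := mod_cast (by omega : 1 ≤ M)
  have hM₀ : (0 : ℝ) < M := by linarith
  have hint := intervalIntegrable_rpow_mul_sq hβ (continuous_Frho hγ₀ hρ)
  have hterm (j : ℕ) (hj : j ∈ Finset.range J) :
      c * ρ ^ 2 * ((M : ℝ) ^ (j + 1)) ^ (1 + 2 * γ - β) ≤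
        -∫ ξ in (δ / M ^ j)..(δ / M ^ (j + 1)), ξ ^ β * Frho γ ρ ξ ^ 2 := by
    have hρj : ρ * ((M ^ (j + 1) : ℕ) : ℝ) ^ γ ≤ 1 := by
      refine le_trans ?_ hJ
      push_cast
      gcongr
      exact Finset.mem_range.1 hj
    have hMj : δ * M / ((M ^ (j + 1) : ℕ) : ℝ) = δ / M ^ j := by
      push_cast
      rw [pow_succ, mul_div_mul_right _ _ hM₀.ne']
    have h := hannulus ρ (M ^ (j + 1)) hρ (Nat.le_self_pow (by omega) M) hρj
    rw [hMj, intervalIntegral.integral_symm] at h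
    exact_mod_cast h
  calc c * ρ ^ 2 * ∑ j ∈ Finset.range J, ((M : ℝ) ^ (j + 1)) ^ (1 + 2 * γ - β)
      ≤ ∑ j ∈ Finset.range J, -∫ ξ in (δ / M ^ j)..(δ / M ^ (j + 1)), ξ ^ β * Frho γ ρ ξ ^ 2 := by
        rw [Finset.mul_sum]
        exact Finset.sum_le_sum hterm
    _ = ∫ ξ in (δ / M ^ J)..δ, ξ ^ β * Frho γ ρ ξ ^ 2 := by
        rw [Finset.sum_neg_distrib, intervalIntegral.sum_integral_adjacent_intervals
          (a := fun j ↦ δ / (M : ℝ) ^ j) fun j _ ↦ hint _ _, ← intervalIntegral.integral_symm,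
          pow_zero, div_one]
    _ ≤ ∫ ξ in 0..π, ξ ^ β * Frho γ ρ ξ ^ 2 := by
        refine intervalIntegral.integral_mono_interval (by positivity)
          (div_le_self hδ₀.le (one_le_pow₀ hM₁)) (by linarith [pi_gt_three]) ?_ (hint _ _)
        filter_upwards [ae_restrict_mem measurableSet_Ioc] with ξ hξ
        exact mul_nonneg (rpow_nonneg hξ.1.le _) (sq_nonneg _)

end WeightedLowerBound

section WeightedUpperBound

variable {β γ h : ℝ}

theorem integral_zero_rpow_mul_sq_le {f : ℝ → ℝ} {B : ℝ} (hβ : -1 < β) (hf : Continuous f)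
    (hh : 0 ≤ h) (hfB : ∀ ξ, |f ξ| ≤ B) :
    ∫ ξ in 0..h, ξ ^ β * f ξ ^ 2 ≤ B ^ 2 * (h ^ (β + 1) / (β + 1)) := by
  calc ∫ ξ in 0..h, ξ ^ β * f ξ ^ 2
      ≤ ∫ ξ in 0..h, ξ ^ β * B ^ 2 :=
        intervalIntegral.integral_mono_on hh (intervalIntegrable_rpow_mul_sq hβ hf _ _)
          ((intervalIntegral.intervalIntegrable_rpow' hβ).mul_const _) fun ξ hξ ↦
          mul_le_mul_of_nonneg_left (sq_le_sq.2 ((hfB ξ).trans (le_abs_self B)))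
            (rpow_nonneg hξ.1 _)
    _ = B ^ 2 * (h ^ (β + 1) / (β + 1)) := by
        rw [intervalIntegral.integral_mul_const, integral_rpow (.inl hβ), zero_rpow (by linarith),
          sub_zero, mul_comm]

theorem integral_rpow_mul_sq_le {f : ℝ → ℝ} {A R p : ℝ} (hβ : -1 < β) (hf : Continuous f)
    (hh : 0 < h) (hhR : h ≤ R) (hfA : ∀ ξ, 0 < ξ → ξ ≤ R → |f ξ| ≤ A * ξ ^ p) :
    ∫ ξ in h..R, ξ ^ β * f ξ ^ 2 ≤ A ^ 2 * ∫ ξ in h..R, ξ ^ (β + 2 * p) := by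
  have hle (ξ : ℝ) (hξ : ξ ∈ Icc h R) : ξ ^ β * f ξ ^ 2 ≤ A ^ 2 * ξ ^ (β + 2 * p) := by
    have hξ₀ : 0 < ξ := hh.trans_le hξ.1
    calc ξ ^ β * f ξ ^ 2 ≤ ξ ^ β * (A * ξ ^ p) ^ 2 := by
          gcongr ?_ * ?_
          exact sq_le_sq.2 ((hfA ξ hξ₀ hξ.2).trans (le_abs_self _))
      _ = A ^ 2 * ξ ^ (β + 2 * p) := by
          rw [rpow_add hξ₀, mul_comm 2 p, rpow_mul hξ₀.le, rpow_two]
          ring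
  rw [← intervalIntegral.integral_const_mul]
  exact intervalIntegral.integral_mono_on hhR (intervalIntegrable_rpow_mul_sq hβ hf _ _)
    ((intervalIntegral.intervalIntegrable_rpow
      (.inr (notMem_uIcc_of_lt hh (hh.trans_le hhR)))).const_mul _) hle

theorem exists_integral_rpow_mul_sq_Frho_le (hγ₀ : 0 < γ) (hγ₃ : γ < 3) (hβ : -1 < β) :
    ∃ C, 0 < C ∧ ∀ h, 0 < h → h ≤ 1 → ∫ ξ in 0..π, ξ ^ β * Frho γ (h ^ γ) ξ ^ 2 ≤
      C * (h ^ γ) ^ 2 * (h ^ (β - 1 - 2 * γ) + ∫ ξ in h..π, ξ ^ (β - 1 - 2 * γ - 1)) := by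
  obtain ⟨K, hK, hnear⟩ := exists_abs_Frho_rpow_le_div hγ₀
  obtain ⟨L, hL, hfar⟩ := exists_abs_Frho_le_mul_rpow hγ₀ hγ₃
  have hβ₁ : 0 < β + 1 := by linarith
  refine ⟨K ^ 2 / (β + 1) + L ^ 2, by positivity, fun h hh hh₁ ↦ ?_⟩
  have hρ : 0 < h ^ γ := rpow_pos_of_pos hh γ
  have hF := continuous_Frho hγ₀ hρ
  have hhπ : h ≤ π := by linarith [pi_gt_three]
  have hint := intervalIntegrable_rpow_mul_sq hβ hF
  have hinner : ∫ ξ in 0..h, ξ ^ β * Frho γ (h ^ γ) ξ ^ 2 ≤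
      K ^ 2 / (β + 1) * (h ^ γ) ^ 2 * h ^ (β - 1 - 2 * γ) := by
    refine (integral_zero_rpow_mul_sq_le hβ hF hh.le (hnear h hh hh₁)).trans_eq ?_
    rw [rpow_sub hh, rpow_sub hh, rpow_add hh, mul_comm 2 γ, rpow_mul hh.le, rpow_one, rpow_two]
    field_simp
  have houter : ∫ ξ in h..π, ξ ^ β * Frho γ (h ^ γ) ξ ^ 2 ≤
      L ^ 2 * (h ^ γ) ^ 2 * ∫ ξ in h..π, ξ ^ (β - 1 - 2 * γ - 1) := by
    have hexp : β + 2 * (-1 - γ) = β - 1 - 2 * γ - 1 := by ring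
    have hle := integral_rpow_mul_sq_le hβ hF hh hhπ fun ξ ↦ hfar _ ξ hρ
    rwa [hexp, mul_pow] at hle
  have htail : 0 ≤ ∫ ξ in h..π, ξ ^ (β - 1 - 2 * γ - 1) :=
    intervalIntegral.integral_nonneg hhπ fun ξ hξ ↦ rpow_nonneg (hh.le.trans hξ.1) _
  rw [← intervalIntegral.integral_add_adjacent_intervals (hint 0 h) (hint h π)]
  have hcross₁ : 0 ≤ K ^ 2 / (β + 1) * (h ^ γ) ^ 2 * ∫ ξ in h..π, ξ ^ (β - 1 - 2 * γ - 1) := by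
    positivity
  have hcross₂ : 0 ≤ L ^ 2 * (h ^ γ) ^ 2 * h ^ (β - 1 - 2 * γ) := by positivity
  linarith

theorem intervalIntegral_even {f : ℝ → ℝ} {b : ℝ} (hf : f.Even)
    (hint : IntervalIntegrable f volume 0 b) : ∫ x in (-b)..b, f x = 2 * ∫ x in 0..b, f x := by
  have hcomp : (fun x ↦ f (-x)) = f := funext hf
  have hint_neg : IntervalIntegrable f volume (-b) 0 := by
    have h := (IntervalIntegrable.iff_comp_neg).1 hint
    rw [hcomp, neg_zero] at h
    exact h.symm
  have hneg : ∫ x in (-b)..0, f x = ∫ x in 0..b, f x := by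
    have h := intervalIntegral.integral_comp_neg (a := 0) (b := b) f
    rw [hcomp, neg_zero] at h
    exact h.symm
  rw [← intervalIntegral.integral_add_adjacent_intervals hint_neg hint, hneg, two_mul]

theorem integral_abs_rpow_mul_sq_Frho (hγ : 0 < γ) (hβ : -1 < β) {ρ : ℝ} (hρ : 0 < ρ) :
    ∫ ξ in (-π)..π, |ξ| ^ β * Frho γ ρ ξ ^ 2 = 2 * ∫ ξ in 0..π, ξ ^ β * Frho γ ρ ξ ^ 2 := by
  have hint := intervalIntegrable_rpow_mul_sq hβ (continuous_Frho hγ hρ) 0 π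
  have habs : EqOn (fun ξ ↦ ξ ^ β * Frho γ ρ ξ ^ 2) (fun ξ ↦ |ξ| ^ β * Frho γ ρ ξ ^ 2) (Ι 0 π) :=
    fun ξ hξ ↦ by
      rw [uIoc_of_le pi_pos.le] at hξ
      simp only [abs_of_pos hξ.1]
  have heven : (fun ξ ↦ |ξ| ^ β * Frho γ ρ ξ ^ 2).Even := fun ξ ↦ by
    simp only [abs_neg, Frho_eq_cosSeries, cosSeries_neg]
  rw [intervalIntegral_even heven (hint.congr habs),
    intervalIntegral.integral_congr_ae (ae_of_all _ habs)]

end WeightedUpperBound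

section TailOrder

variable {s h : ℝ}

/-- The order of magnitude of `∫ x in h..1, x ^ (s - 1)` as `h` decreases to `0`. -/
def tailOrder (s h : ℝ) : ℝ := if s < 0 then h ^ s else if s = 0 then |log h| else 1

theorem tailOrder_of_neg (hs : s < 0) : tailOrder s h = h ^ s := if_pos hs

theorem tailOrder_zero : tailOrder 0 h = |log h| := by simp [tailOrder]

theorem tailOrder_of_pos (hs : 0 < s) : tailOrder s h = 1 := by
  rw [tailOrder, if_neg hs.not_gt, if_neg hs.ne']

theorem exists_rpow_add_integral_le_tailOrder (s : ℝ) :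
    ∃ C, 0 < C ∧ ∀ h, 0 < h → h ≤ exp (-1) →
      h ^ s + ∫ x in h..π, x ^ (s - 1) ≤ C * tailOrder s h := by
  have hle_one {h : ℝ} (hh : h ≤ exp (-1)) : h ≤ 1 := hh.trans (exp_le_one_iff.2 (by norm_num))
  have hle_pi {h : ℝ} (hh : h ≤ exp (-1)) : h ≤ π := by linarith [hle_one hh, pi_gt_three]
  rcases lt_trichotomy s 0 with hs | rfl | hs
  · have hs' : 0 < -s := neg_pos.2 hs
    refine ⟨1 + 1 / (-s), by positivity, fun h hh₀ hh ↦ ?_⟩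
    have hint := integral_rpow_neg_one_sub_le hs' hh₀ (hle_pi hh)
    rw [neg_neg, ← neg_add', add_comm, neg_add, neg_neg, ← sub_eq_add_neg] at hint
    rw [tailOrder_of_neg hs]
    linear_combination hint
  · refine ⟨2 + log π, by linarith [log_nonneg (by linarith [pi_gt_three] : 1 ≤ π)],
      fun h hh₀ hh ↦ ?_⟩
    have hlog : log h ≤ -1 := (log_le_iff_le_exp hh₀).2 hh
    have hint : ∫ x in h..π, x ^ ((0 : ℝ) - 1) = log π - log h := by
      simp only [zero_sub, rpow_neg_one]
      rw [integral_inv_of_pos hh₀ pi_pos, log_div pi_pos.ne' hh₀.ne']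
    rw [tailOrder_zero, abs_of_neg (by linarith), rpow_zero, hint]
    nlinarith [log_nonneg (by linarith [pi_gt_three] : 1 ≤ π)]
  · refine ⟨1 + π ^ s / s, by positivity, fun h hh₀ hh ↦ ?_⟩
    rw [tailOrder_of_pos hs, integral_rpow (.inl (by linarith)), sub_add_cancel, mul_one]
    gcongr
    · exact rpow_le_one hh₀.le (hle_one hh) hs.le
    · exact sub_le_self _ (by positivity)

theorem exists_rpow_le_sum_of_lt {M : ℝ} (hM : 0 < M) (hs : s < 0) :
    ∃ c, 0 < c ∧ ∀ (h : ℝ) (J : ℕ), 0 < h → 1 ≤ J → 1 < M ^ (J + 1) * h →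
      c * h ^ s ≤ ∑ j ∈ Finset.range J, (M ^ (j + 1)) ^ (-s) := by
  refine ⟨M ^ s, by positivity, fun h J hh hJ₁ hJ ↦ ?_⟩
  calc M ^ s * h ^ s = ((M * h)⁻¹) ^ (-s) := by
        rw [inv_rpow (by positivity), rpow_neg (by positivity), inv_inv, mul_rpow hM.le hh.le]
    _ ≤ (M ^ (J - 1 + 1)) ^ (-s) := by
        refine rpow_le_rpow (by positivity) ?_ (neg_nonneg.2 hs.le)
        rw [Nat.sub_add_cancel hJ₁, inv_le_iff_one_le_mul₀ (by positivity), ← mul_assoc,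
          ← pow_succ]
        exact hJ.le
    _ ≤ ∑ j ∈ Finset.range J, (M ^ (j + 1)) ^ (-s) :=
        Finset.single_le_sum (f := fun j ↦ (M ^ (j + 1)) ^ (-s)) (fun _ _ ↦ by positivity)
          (Finset.mem_range.2 (Nat.sub_lt hJ₁ one_pos))

theorem exists_abs_log_le_natCast {M : ℝ} (hM : 1 < M) :
    ∃ c, 0 < c ∧ ∀ (h : ℝ) (J : ℕ), 0 < h → h ≤ 1 → 1 ≤ J → 1 < M ^ (J + 1) * h →
      c * |log h| ≤ J := by
  have : 0 < M := one_pos.trans hM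
  have hlogM : 0 < log M := log_pos hM
  refine ⟨1 / (2 * log M), by positivity, fun h J hh hh₁ hJ₁ hJ ↦ ?_⟩
  have hJ₁' : (1 : ℝ) ≤ J := mod_cast hJ₁
  have hlog : 0 < (J + 1) * log M + log h := by
    have hpos := log_pos hJ
    rwa [log_mul (by positivity) hh.ne', log_pow, Nat.cast_add_one] at hpos
  rw [abs_of_nonpos (log_nonpos hh.le hh₁), div_mul_eq_mul_div, one_mul,
    div_le_iff₀ (by positivity)]
  nlinarith

theorem exists_tailOrder_le_sum_of_lt {M : ℝ} (hM : 1 < M) (s : ℝ) :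
    ∃ c, 0 < c ∧ ∀ (h : ℝ) (J : ℕ), 0 < h → h ≤ 1 → 1 ≤ J → 1 < M ^ (J + 1) * h →
      c * tailOrder s h ≤ ∑ j ∈ Finset.range J, (M ^ (j + 1)) ^ (-s) := by
  have : 0 < M := one_pos.trans hM
  rcases lt_trichotomy s 0 with hs | rfl | hs
  · obtain ⟨c, hc, hsum⟩ := exists_rpow_le_sum_of_lt this hs
    refine ⟨c, hc, fun h J hh _ hJ₁ hJ ↦ ?_⟩
    rw [tailOrder_of_neg hs]
    exact hsum h J hh hJ₁ hJ
  · obtain ⟨c, hc, hlog⟩ := exists_abs_log_le_natCast hM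
    refine ⟨c, hc, fun h J hh hh₁ hJ₁ hJ ↦ ?_⟩
    simpa only [tailOrder_zero, neg_zero, rpow_zero, Finset.sum_const, Finset.card_range,
      nsmul_eq_mul, mul_one] using hlog h J hh hh₁ hJ₁ hJ
  · refine ⟨M ^ (-s), by positivity, fun h J _ _ hJ₁ _ ↦ ?_⟩
    have hfirst := Finset.single_le_sum (f := fun j ↦ (M ^ (j + 1)) ^ (-s))
      (fun _ _ ↦ by positivity) (Finset.mem_range.2 hJ₁)
    simpa only [tailOrder_of_pos hs, mul_one, zero_add, pow_one] using hfirst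

theorem exists_tailOrder_le_sum {M : ℝ} (hM : 1 < M) (s : ℝ) :
    ∃ c, 0 < c ∧ ∀ h, 0 < h → M * h ≤ 1 → ∃ J : ℕ, M ^ J * h ≤ 1 ∧
      c * tailOrder s h ≤ ∑ j ∈ Finset.range J, (M ^ (j + 1)) ^ (-s) := by
  obtain ⟨c, hc, hsum⟩ := exists_tailOrder_le_sum_of_lt hM s
  refine ⟨c, hc, fun h hh hMh ↦ ?_⟩
  have hM_le : M ≤ h⁻¹ := one_div h ▸ (le_div_iff₀ hh).2 hMh
  have h_le : h ≤ 1 := by nlinarith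
  obtain ⟨J, hJ_le, hJ_lt⟩ := exists_nat_pow_near (hM.le.trans hM_le) hM
  have hJ₁ : 1 ≤ J := by
    by_contra! hJ
    obtain rfl : J = 0 := by omega
    rw [zero_add, pow_one] at hJ_lt
    exact hM_le.not_gt hJ_lt
  have hJh : M ^ J * h ≤ 1 := (le_div_iff₀ hh).1 (by rwa [one_div])
  exact ⟨J, hJh, hsum h J hh h_le hJ₁ ((inv_lt_iff_one_lt_mul₀ hh).1 hJ_lt)⟩

end TailOrder

section Asymptotics

variable {β γ : ℝ}

/-- The size `g(ρ)` of the weighted integral of `F_ρ²`, up to constants, written in terms of the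
scale `h = ρ^{1/γ}` at which `F_ρ` is concentrated. -/
def weightedOrder (β γ h : ℝ) : ℝ := (h ^ γ) ^ 2 * tailOrder (β - 1 - 2 * γ) h

theorem exists_ite_eq_mul_weightedOrder (hγ : 0 < γ) (β : ℝ) :
    ∃ k, 0 < k ∧ ∀ h, 0 < h →
      (if β < 1 + 2 * γ then (h ^ γ) ^ ((β - 1) / γ)
        else if β = 1 + 2 * γ then (h ^ γ) ^ 2 * |log (h ^ γ)| else (h ^ γ) ^ 2) =
      k * weightedOrder β γ h := by
  rcases lt_trichotomy β (1 + 2 * γ) with hβ | hβ | hβ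
  · refine ⟨1, one_pos, fun h hh ↦ ?_⟩
    have hexp : β - 1 = γ * 2 + (β - 1 - 2 * γ) := by ring
    rw [if_pos hβ, weightedOrder, tailOrder_of_neg (by linarith), one_mul, ← rpow_mul hh.le,
      mul_div_cancel₀ _ hγ.ne', hexp, rpow_add hh, rpow_mul hh.le, rpow_two]
    ring_nf
  · refine ⟨γ, hγ, fun h hh ↦ ?_⟩
    have hs : β - 1 - 2 * γ = 0 := by linarith
    rw [if_neg hβ.not_lt, if_pos hβ, weightedOrder, hs, tailOrder_zero, log_rpow hh, abs_mul,
      abs_of_pos hγ]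
    ring
  · refine ⟨1, one_pos, fun h _ ↦ ?_⟩
    rw [if_neg hβ.not_gt, if_neg hβ.ne', weightedOrder, tailOrder_of_pos (by linarith), mul_one,
      one_mul]

theorem exists_integral_le_weightedOrder (hγ₀ : 0 < γ) (hγ₃ : γ < 3) (hβ : -1 < β) :
    ∃ C, 0 < C ∧ ∀ h, 0 < h → h ≤ exp (-1) →
      ∫ ξ in (-π)..π, |ξ| ^ β * Frho γ (h ^ γ) ξ ^ 2 ≤ C * weightedOrder β γ h := by
  obtain ⟨C, hC, hintegral⟩ := exists_integral_rpow_mul_sq_Frho_le hγ₀ hγ₃ hβ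
  obtain ⟨D, hD, htail⟩ := exists_rpow_add_integral_le_tailOrder (β - 1 - 2 * γ)
  refine ⟨2 * (C * D), by positivity, fun h hh hh_exp ↦ ?_⟩
  calc ∫ ξ in (-π)..π, |ξ| ^ β * Frho γ (h ^ γ) ξ ^ 2
      = 2 * ∫ ξ in 0..π, ξ ^ β * Frho γ (h ^ γ) ξ ^ 2 :=
        integral_abs_rpow_mul_sq_Frho hγ₀ hβ (rpow_pos_of_pos hh γ)
    _ ≤ 2 * (C * (h ^ γ) ^ 2 *
          (h ^ (β - 1 - 2 * γ) + ∫ ξ in h..π, ξ ^ (β - 1 - 2 * γ - 1))) := by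
        gcongr
        exact hintegral h hh (hh_exp.trans (exp_le_one_iff.2 (by norm_num)))
    _ ≤ 2 * (C * (h ^ γ) ^ 2 * (D * tailOrder (β - 1 - 2 * γ) h)) := by
        gcongr
        exact htail h hh hh_exp
    _ = 2 * (C * D) * weightedOrder β γ h := by
        rw [weightedOrder]
        ring

theorem exists_weightedOrder_le_integral (hγ₀ : 0 < γ) (hγ₂ : γ < 2) (hβ : -1 < β) :
    ∃ c h₀, 0 < c ∧ 0 < h₀ ∧ ∀ h, 0 < h → h ≤ h₀ →
      c * weightedOrder β γ h ≤ ∫ ξ in (-π)..π, |ξ| ^ β * Frho γ (h ^ γ) ξ ^ 2 := by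
  obtain ⟨c, M, hc, hM, hintegral⟩ := exists_sum_le_integral hγ₀ hγ₂ hβ
  have hM₁ : (1 : ℝ) < M := mod_cast (by omega : 1 < M)
  obtain ⟨d, hd, htail⟩ := exists_tailOrder_le_sum hM₁ (β - 1 - 2 * γ)
  refine ⟨2 * (c * d), 1 / M, by positivity, by positivity, fun h hh hhM ↦ ?_⟩
  obtain ⟨J, hJ, hsum⟩ := htail h hh ((le_div_iff₀' (by linarith)).1 hhM)
  have hexp : -(β - 1 - 2 * γ) = 1 + 2 * γ - β := by ring
  have hρJ : h ^ γ * ((M : ℝ) ^ J) ^ γ ≤ 1 := by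
    rw [← mul_rpow hh.le (by positivity), mul_comm]
    exact rpow_le_one (by positivity) hJ hγ₀.le
  rw [hexp] at hsum
  calc 2 * (c * d) * weightedOrder β γ h
      = 2 * (c * (h ^ γ) ^ 2 * (d * tailOrder (β - 1 - 2 * γ) h)) := by
        rw [weightedOrder]
        ring
    _ ≤ 2 * (c * (h ^ γ) ^ 2 *
          ∑ j ∈ Finset.range J, ((M : ℝ) ^ (j + 1)) ^ (1 + 2 * γ - β)) := by gcongr
    _ ≤ 2 * ∫ ξ in 0..π, ξ ^ β * Frho γ (h ^ γ) ξ ^ 2 := by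
        gcongr
        exact hintegral _ J (rpow_pos_of_pos hh γ) hρJ
    _ = ∫ ξ in (-π)..π, |ξ| ^ β * Frho γ (h ^ γ) ξ ^ 2 :=
        (integral_abs_rpow_mul_sq_Frho hγ₀ hβ (rpow_pos_of_pos hh γ)).symm

end Asymptotics

end Development

theorem stmt8 (γ β : ℝ) (hγ0 : 0 < γ) (hγ2 : γ < 2) (hβ : -1 < β) :
    ∃ c C ρ₀ : ℝ, 0 < c ∧ 0 < C ∧ 0 < ρ₀ ∧
      ∀ ρ : ℝ, 0 < ρ → ρ < ρ₀ →
        c * (if β < 1 + 2 * γ then ρ ^ ((β - 1) / γ)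
             else if β = 1 + 2 * γ then ρ ^ 2 * |Real.log ρ|
             else ρ ^ 2) ≤
          (∫ ξ in (-Real.pi)..Real.pi, |ξ| ^ β * Frho γ ρ ξ ^ 2) ∧
        (∫ ξ in (-Real.pi)..Real.pi, |ξ| ^ β * Frho γ ρ ξ ^ 2) ≤
          C * (if β < 1 + 2 * γ then ρ ^ ((β - 1) / γ)
               else if β = 1 + 2 * γ then ρ ^ 2 * |Real.log ρ|
               else ρ ^ 2) := by
  obtain ⟨k, hk, horder⟩ := exists_ite_eq_mul_weightedOrder hγ0 β
  obtain ⟨c, h₀, hc, hh₀, hlower⟩ := exists_weightedOrder_le_integral hγ0 hγ2 hβ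
  obtain ⟨C, hC, hupper⟩ :=
    exists_integral_le_weightedOrder hγ0 (hγ2.trans (by norm_num : (2 : ℝ) < 3)) hβ
  refine ⟨c / k, C / k, min h₀ (Real.exp (-1)) ^ γ, by positivity, by positivity, by positivity,
    fun ρ hρ hρ_lt ↦ ?_⟩
  obtain ⟨h, hh, rfl⟩ : ∃ h, 0 < h ∧ h ^ γ = ρ :=
    ⟨ρ ^ γ⁻¹, by positivity, Real.rpow_inv_rpow hρ.le hγ0.ne'⟩
  have hh_lt : h < min h₀ (Real.exp (-1)) :=
    (Real.rpow_lt_rpow_iff hh.le (by positivity) hγ0).1 hρ_lt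
  obtain ⟨hh₀_lt, hh_exp⟩ := lt_min_iff.1 hh_lt
  rw [horder h hh, ← mul_assoc, ← mul_assoc, div_mul_cancel₀ c hk.ne', div_mul_cancel₀ C hk.ne']
  exact ⟨hlower h hh hh₀_lt.le, hupper h hh hh_exp.le⟩
end
end
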